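/- arXiv:0801.0077 — 12 statements merged into one kernel-verified Lean document; each statement's English description precedes it below -/
import Mathlib

section
/- For all real numbers l, m with 0 < l < m and every real x ≥ 0, one has x^l/(1+x)^m ≤ l^l · (m−l)^(m−l) / m^m. -/
/-- Lemma `maxest`: for `0 < l < m` and `x ≥ 0`,
`x^l / (1+x)^m ≤ l^l (m-l)^(m-l) / m^m` (real powers). -/
theorem maxest (l m : ℝ) (hl : 0 < l) (hlm : l < m) (x : ℝ) (hx : 0 ≤ x) :
    x ^ l / (1 + x) ^ m ≤ l ^ l * (m - l) ^ (m - l) / m ^ m := by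
  have hm : 0 < m := hl.trans hlm
  have hd : 0 < m - l := sub_pos.2 hlm
  -- Weighted AM-GM at the points `x / l` and `1 / (m - l)`, which coincide exactly at the
  -- maximiser `x = l / (m - l)`.
  have amgm : (x / l) ^ (l / m) * (1 / (m - l)) ^ ((m - l) / m) ≤ (1 + x) / m := by
    have h := Real.geom_mean_le_arith_mean2_weighted (w₁ := l / m) (w₂ := (m - l) / m)
      (p₁ := x / l) (p₂ := 1 / (m - l)) (by positivity) (by positivity) (by positivity)
      (by positivity) (by field_simp; ring)
    refine h.trans_eq ?_
    field_simp
    ring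
  have key : x ^ l / l ^ l * (1 / (m - l) ^ (m - l)) ≤ (1 + x) ^ m / m ^ m := by
    have h := Real.rpow_le_rpow (by positivity) amgm hm.le
    rwa [Real.mul_rpow (by positivity) (by positivity), ← Real.rpow_mul (by positivity),
      ← Real.rpow_mul (by positivity), div_mul_cancel₀ _ hm.ne', div_mul_cancel₀ _ hm.ne',
      Real.div_rpow hx hl.le, Real.div_rpow zero_le_one hd.le, Real.one_rpow,
      Real.div_rpow (by positivity) hm.le] at h
  have h1 : 0 < l ^ l := Real.rpow_pos_of_pos hl _
  have h2 : 0 < (m - l) ^ (m - l) := Real.rpow_pos_of_pos hd _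
  have h3 : 0 < m ^ m := Real.rpow_pos_of_pos hm _
  have h4 : 0 < (1 + x) ^ m := Real.rpow_pos_of_pos (by positivity) _
  rw [div_mul_div_comm, mul_one, div_le_div_iff₀ (by positivity) h3] at key
  rw [div_le_div_iff₀ h4 h3]
  linarith
end

section
/- Let 0 < r₀ < r and let x be a real number with 0 < x < r/r₀ − 1. Then α_{r₀}(r, r/(1+x)) > arcsin(r₀·x/r); equivalently, (1+x)·(√(1 − (r₀/r)²) − √(1/(1+x)² − (r₀/r)²)) > x. -/
/-!
With `s = r / (1 + x)`, one has `r₀ < s < r` and `x = (r - s) / s`. After removing the increasing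
function `arcsin`, the claim is `r - s < √(r² - r₀²) - √(s² - r₀²)`. This holds because
`t - √(t² - r₀²) = r₀² / (t + √(t² - r₀²))` is strictly decreasing in `t`.
-/

open Real

/-- The angle `α_{r₀}(r₁, r₂)` of the paper's Definition 1.2 (scale-invariant form). -/
noncomputable def alphaAngle (r₀ r₁ r₂ : ℝ) : ℝ :=
  Real.arcsin (r₀ * (Real.sqrt (r₁ ^ 2 - r₀ ^ 2) - Real.sqrt (r₂ ^ 2 - r₀ ^ 2)) / (r₁ * r₂))

theorem sub_lt_sqrt_sub_sqrt {a s r : ℝ} (ha : 0 < a) (has : a < s) (hsr : s < r) :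
    r - s < √(r ^ 2 - a ^ 2) - √(s ^ 2 - a ^ 2) := by
  have hA := Real.sq_sqrt (show 0 ≤ r ^ 2 - a ^ 2 by nlinarith)
  have hB := Real.sq_sqrt (show 0 ≤ s ^ 2 - a ^ 2 by nlinarith)
  have hBA : √(s ^ 2 - a ^ 2) < √(r ^ 2 - a ^ 2) :=
    Real.sqrt_lt_sqrt (by nlinarith) (by nlinarith)
  have hB0 := Real.sqrt_nonneg (s ^ 2 - a ^ 2)
  generalize √(r ^ 2 - a ^ 2) = A at *
  generalize √(s ^ 2 - a ^ 2) = B at *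
  have hBs : B < s := by nlinarith
  by_contra! h
  -- Both products equal `a ^ 2`, while each factor on the right dominates the one on the left.
  have : (s - B) * (s + B) < (r - A) * (r + A) :=
    mul_lt_mul' (by linarith) (by linarith) (by linarith) (by linarith)
  nlinarith

/-- Lemma `alphabaseest`: for `0 < r₀ < r` and `0 < x < r/r₀ - 1`,
`α_{r₀}(r, r/(1+x)) > arcsin (r₀ x / r)`. -/
theorem alphabaseest (r₀ r x : ℝ) (h₀ : 0 < r₀) (h₁ : r₀ < r)
    (hx : 0 < x) (hx' : x < r / r₀ - 1) :
    alphaAngle r₀ r (r / (1 + x)) > Real.arcsin (r₀ * x / r) := by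
  have hr : 0 < r := h₀.trans h₁
  have h1x : 0 < 1 + x := by linarith
  have hs : r₀ < r / (1 + x) := by
    rw [lt_div_iff₀ h1x, mul_comm, ← lt_div_iff₀ h₀]
    linarith
  have hsr : r / (1 + x) < r := div_lt_self hr (by linarith)
  have hxs : r - r / (1 + x) = x * (r / (1 + x)) := by
    field_simp
    ring
  have key := sub_lt_sqrt_sub_sqrt h₀ hs hsr
  unfold alphaAngle
  generalize r / (1 + x) = s at *
  have hs0 : 0 < s := h₀.trans hs
  apply Real.arcsin_lt_arcsin
  · have : 0 ≤ r₀ * x / r := by positivity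
    linarith
  · rw [div_lt_div_iff₀ hr (by positivity)]
    rw [hxs] at key
    have := mul_lt_mul_of_pos_left key (mul_pos h₀ hr)
    linarith
  · rw [div_le_one (by positivity), mul_comm r s]
    have hA : √(r ^ 2 - r₀ ^ 2) ≤ r := Real.sqrt_le_iff.2 ⟨hr.le, by nlinarith⟩
    have hB := Real.sqrt_nonneg (s ^ 2 - r₀ ^ 2)
    exact mul_le_mul hs.le (by linarith) (by linarith) hs0.le
end

section
/- For every integer k ≥ 1 and every real r with 0 < r ≤ π/2, one has ∫₀^r (sin t)^(k−1) dt > (sin r)^k / k. -/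
open Real intervalIntegral

/-- Lemma `sphvollem`: for `k ≥ 1` and `0 < r ≤ π/2`,
`∫₀^r sin^(k-1) t dt > sin^k r / k`. -/
theorem sphvollem (k : ℕ) (hk : 1 ≤ k) (r : ℝ) (hr : 0 < r) (hr' : r ≤ Real.pi / 2) :
    (∫ t in (0:ℝ)..r, Real.sin t ^ (k - 1)) > Real.sin r ^ k / (k : ℝ) := by
  have hk0 : (k : ℝ) ≠ 0 := by positivity
  -- The right-hand side is the integral of the derivative `sin ^ (k - 1) * cos` of `sin ^ k / k`;
  -- this is smaller than the left-hand side because `cos t < 1` and `0 < sin t` on `(0, r]`.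
  have key : ∫ t in (0:ℝ)..r, Real.sin t ^ (k - 1) * Real.cos t = Real.sin r ^ k / (k : ℝ) := by
    have hd : ∀ t ∈ Set.uIcc 0 r, HasDerivAt (fun t => Real.sin t ^ k / (k : ℝ))
        (Real.sin t ^ (k - 1) * Real.cos t) t := by
      intro t _
      refine (((Real.hasDerivAt_sin t).fun_pow k).div_const (k : ℝ)).congr_deriv ?_
      rw [mul_assoc, mul_div_cancel_left₀ _ hk0]
    rw [integral_eq_sub_of_hasDerivAt hd (Continuous.intervalIntegrable (by fun_prop) _ _)]
    simp [show k ≠ 0 by omega]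
  have hsin : ∀ t ∈ Set.Ioc 0 r, 0 < Real.sin t := fun t ht =>
    Real.sin_pos_of_pos_of_lt_pi ht.1 (by linarith [ht.2, Real.pi_pos])
  rw [← key]
  refine integral_lt_integral_of_continuousOn_of_le_of_exists_lt hr
    (Continuous.continuousOn (by fun_prop)) (Continuous.continuousOn (by fun_prop)) ?_
    ⟨r, ⟨hr.le, le_rfl⟩, ?_⟩
  · intro t ht
    exact mul_le_of_le_one_right (pow_nonneg (hsin t ht).le _) (Real.cos_le_one t)
  · have hs := hsin r ⟨hr, le_rfl⟩
    have hc : Real.cos r < 1 := by nlinarith [Real.sin_sq_add_cos_sq r, Real.cos_le_one r]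
    exact mul_lt_of_lt_one_right (pow_pos hs _) hc
end

section
/- Let n ≥ 2 be an integer. Then: (a) for every real r > 0, ∫₀^r (sinh t)^(n−1) dt < e^((n−1)·r) / (2^(n−1)·(n−1)); and (b) the ratio 2^(n−1)·(n−1)·e^(−(n−1)·r)·∫₀^r (sinh t)^(n−1) dt tends to 1 as r → ∞. -/
open Real Filter intervalIntegral

/-!
With `m = n - 1 ≥ 1`, write `sinh t = (e^t / 2) (1 - e^(-2t))`. For `t ≥ 0` the second factor lies in
`[0, 1]`, so `sinh^m t ≤ e^(mt) / 2^m`; Bernoulli's inequality gives the matching lower bound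
`sinh^m t ≥ (e^(mt) - m e^((m-2)t)) / 2^m`. Integrating over `[0, r]`, the upper bound
becomes `(e^(mr) - 1) / (2^m m)`, which is strictly below the claimed quantity, and the error term in
the lower bound is at most `m r e^((m-1)r) / 2^m`, negligible against `e^(mr)`. The limit follows by
squeezing.
-/

lemma sinh_pow_le_exp (m : ℕ) {t : ℝ} (ht : 0 ≤ t) :
    Real.sinh t ^ m ≤ Real.exp (m * t) / 2 ^ m := by
  rw [Real.exp_nat_mul, ← div_pow]
  refine pow_le_pow_left₀ (Real.sinh_nonneg_iff.2 ht) ?_ m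
  rw [Real.sinh_eq]
  linarith [Real.exp_pos (-t)]

/-- Bernoulli's lower bound for `sinh t ^ m`. The error term is frozen at the right endpoint `r`,
using that `e^((m-1)t)` is nondecreasing in `t` for `m ≥ 1`. -/
lemma exp_sub_le_sinh_pow (m : ℕ) (hm : 1 ≤ m) {t r : ℝ} (ht : 0 ≤ t) (htr : t ≤ r) :
    (Real.exp (m * t) - m * Real.exp ((m - 1) * r)) / 2 ^ m ≤ Real.sinh t ^ m := by
  have hm' : (1 : ℝ) ≤ m := by exact_mod_cast hm
  have hs : Real.sinh t = Real.exp t / 2 * (1 + -Real.exp (-(2 * t))) := by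
    have h : Real.exp t * Real.exp (-(2 * t)) = Real.exp (-t) := by
      rw [← Real.exp_add]; ring_nf
    rw [Real.sinh_eq, ← h]; ring
  have hb : 1 + (m : ℝ) * -Real.exp (-(2 * t)) ≤ (1 + -Real.exp (-(2 * t))) ^ m := by
    refine one_add_mul_le_pow ?_ m
    have : Real.exp (-(2 * t)) ≤ 1 := Real.exp_le_one_iff.2 (by linarith)
    linarith
  have he : Real.exp (m * t) * Real.exp (-(2 * t)) ≤ Real.exp ((m - 1) * r) := by
    rw [← Real.exp_add]
    refine Real.exp_le_exp.2 ?_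
    nlinarith [mul_le_mul_of_nonneg_left htr (sub_nonneg.2 hm')]
  rw [hs, mul_pow, div_pow, ← Real.exp_nat_mul, div_mul_eq_mul_div]
  refine div_le_div_of_nonneg_right ?_ (by positivity)
  have h1 := mul_le_mul_of_nonneg_left hb (Real.exp_pos (m * t)).le
  have h2 := mul_le_mul_of_nonneg_left he (Nat.cast_nonneg (α := ℝ) m)
  nlinarith

lemma integral_exp_nat_mul (m : ℕ) (hm : 1 ≤ m) (r : ℝ) :
    ∫ t in (0 : ℝ)..r, Real.exp (m * t) = (Real.exp (m * r) - 1) / m := by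
  have hm' : (m : ℝ) ≠ 0 := by positivity
  rw [intervalIntegral.integral_comp_mul_left (fun x => Real.exp x) hm', integral_exp]
  simp [div_eq_inv_mul]

lemma integral_sinh_pow_le (m : ℕ) (hm : 1 ≤ m) {r : ℝ} (hr : 0 ≤ r) :
    ∫ t in (0 : ℝ)..r, Real.sinh t ^ m ≤ (Real.exp (m * r) - 1) / (2 ^ m * m) := by
  have h : ∫ t in (0 : ℝ)..r, Real.sinh t ^ m ≤ ∫ t in (0 : ℝ)..r, Real.exp (m * t) / 2 ^ m :=
    intervalIntegral.integral_mono_on hr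
      (Continuous.intervalIntegrable (by fun_prop) _ _)
      (Continuous.intervalIntegrable (by fun_prop) _ _)
      fun t ht => sinh_pow_le_exp m ht.1
  rwa [intervalIntegral.integral_div, integral_exp_nat_mul m hm, div_div,
    mul_comm (m : ℝ) (2 ^ m)] at h

lemma le_integral_sinh_pow (m : ℕ) (hm : 1 ≤ m) {r : ℝ} (hr : 0 ≤ r) :
    ((Real.exp (m * r) - 1) / m - r * (m * Real.exp ((m - 1) * r))) / 2 ^ m ≤
      ∫ t in (0 : ℝ)..r, Real.sinh t ^ m := by
  have h : ∫ t in (0 : ℝ)..r, (Real.exp (m * t) - m * Real.exp ((m - 1) * r)) / 2 ^ m ≤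
      ∫ t in (0 : ℝ)..r, Real.sinh t ^ m :=
    intervalIntegral.integral_mono_on hr
      (Continuous.intervalIntegrable (by fun_prop) _ _)
      (Continuous.intervalIntegrable (by fun_prop) _ _)
      fun t ht => exp_sub_le_sinh_pow m hm ht.1 ht.2
  rwa [intervalIntegral.integral_div, intervalIntegral.integral_sub
    (Continuous.intervalIntegrable (by fun_prop) _ _)
    (Continuous.intervalIntegrable (by fun_prop) _ _), integral_exp_nat_mul m hm,
    intervalIntegral.integral_const, sub_zero, smul_eq_mul] at h

/-- Lemma `sphasymp`: the volume integrand of hyperbolic balls satisfies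
`∫₀^r sinh^(n-1) t dt < e^((n-1)r) / (2^(n-1) (n-1))` for all `r > 0`, and
`2^(n-1) (n-1) e^(-(n-1)r) ∫₀^r sinh^(n-1) t dt → 1` as `r → ∞`. -/
theorem sphasymp (n : ℕ) (hn : 2 ≤ n) :
    (∀ r : ℝ, 0 < r →
      (∫ t in (0:ℝ)..r, Real.sinh t ^ (n - 1)) <
        Real.exp (((n : ℝ) - 1) * r) / (2 ^ (n - 1) * ((n : ℝ) - 1))) ∧
    Tendsto
      (fun r : ℝ => 2 ^ (n - 1) * ((n : ℝ) - 1) * Real.exp (-((n : ℝ) - 1) * r) *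
        ∫ t in (0:ℝ)..r, Real.sinh t ^ (n - 1))
      atTop (nhds 1) := by
  obtain ⟨m, rfl⟩ : ∃ m, n = m + 1 := ⟨n - 1, by omega⟩
  have hm : 1 ≤ m := by omega
  have hm' : (1 : ℝ) ≤ m := by exact_mod_cast hm
  have hm0 : (0 : ℝ) < m := by linarith
  simp only [Nat.add_sub_cancel, Nat.cast_add, Nat.cast_one, add_sub_cancel_right]
  refine ⟨fun r hr => (integral_sinh_pow_le m hm hr.le).trans_lt ?_, ?_⟩
  · exact div_lt_div_of_pos_right (by linarith) (by positivity)
  · have hlim : Tendsto (fun r : ℝ => 1 - Real.exp (-r) - m ^ 2 * (r * Real.exp (-r)))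
        atTop (nhds 1) := by
      have h1 := Real.tendsto_exp_neg_atTop_nhds_zero
      have h2 := Real.tendsto_pow_mul_exp_neg_atTop_nhds_zero 1
      simp only [pow_one] at h2
      simpa using (h1.const_sub 1).sub (h2.const_mul ((m : ℝ) ^ 2))
    refine tendsto_of_tendsto_of_tendsto_of_le_of_le' hlim tendsto_const_nhds ?_ ?_
    · filter_upwards [eventually_ge_atTop 0] with r hr
      have h := mul_le_mul_of_nonneg_left (le_integral_sinh_pow m hm hr)
        (show 0 ≤ 2 ^ m * (m : ℝ) * Real.exp (-m * r) by positivity)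
      refine le_trans ?_ h
      have e1 : Real.exp (-m * r) * Real.exp (m * r) = 1 := by
        rw [← Real.exp_add]; simp
      have e2 : Real.exp (-m * r) * Real.exp ((m - 1) * r) = Real.exp (-r) := by
        rw [← Real.exp_add]; ring_nf
      have e3 : Real.exp (-m * r) ≤ Real.exp (-r) := Real.exp_le_exp.2 (by nlinarith)
      have e4 : 2 ^ m * (m : ℝ) * Real.exp (-m * r) *
          (((Real.exp (m * r) - 1) / m - r * (m * Real.exp ((m - 1) * r))) / 2 ^ m) =
          Real.exp (-m * r) * Real.exp (m * r) - Real.exp (-m * r) -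
            m ^ 2 * (r * (Real.exp (-m * r) * Real.exp ((m - 1) * r))) := by
        field_simp
      rw [e4, e1, e2]
      linarith
    · filter_upwards [eventually_ge_atTop 0] with r hr
      have h := mul_le_mul_of_nonneg_left (integral_sinh_pow_le m hm hr)
        (show 0 ≤ 2 ^ m * (m : ℝ) * Real.exp (-m * r) by positivity)
      refine h.trans ?_
      have e1 : Real.exp (-m * r) * Real.exp (m * r) = 1 := by
        rw [← Real.exp_add]; simp
      have e4 : 2 ^ m * (m : ℝ) * Real.exp (-m * r) *
          ((Real.exp (m * r) - 1) / (2 ^ m * m)) =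
          Real.exp (-m * r) * Real.exp (m * r) - Real.exp (-m * r) := by
        field_simp
      rw [e4, e1]
      linarith [Real.exp_pos (-m * r)]
end

section
/- Let n ≥ 1, let C ⊆ EuclideanSpace ℝ n be a closed convex set containing the origin, and let R > 0. Let Ω_R(C) = {θ ∈ S^(n−1) : R·θ ∈ C}. Then σ(Ω_R(C)) · R^n ≤ n · vol(C), where vol denotes Lebesgue measure on EuclideanSpace ℝ n. -/
/-!
The surface measure of a measurable set `Ω` of unit directions is `n` times the volume of the open
unit cone `(0, 1) • Ω`. Dilating this cone by `R` multiplies its volume by `Rⁿ`. For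
`Ω = {θ | R • θ ∈ C}`, every point of the dilated cone has the form `R • (t • θ) = t • (R • θ)` with
`0 < t < 1`, a point of the segment from `0 ∈ C` to `R • θ ∈ C`; by convexity the dilated cone lies
in `C`, and monotonicity of the volume gives the claim.
-/

open Metric MeasureTheory
open scoped Pointwise

/-- Corollary `rgenmeas` (Euclidean case): if `C` is a closed convex set containing `0`,
and `Ω_R(C)` is the set of unit directions `θ` with `R•θ ∈ C`, then
`σ(Ω_R(C)) · Rⁿ ≤ n · vol(C)`, where `σ` is the surface measure on the unit sphere. -/
theorem rgenmeas (n : ℕ) (hn : 1 ≤ n) (C : Set (EuclideanSpace ℝ (Fin n)))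
    (hCclosed : IsClosed C) (hCconv : Convex ℝ C)
    (h0 : (0 : EuclideanSpace ℝ (Fin n)) ∈ C) (R : ℝ) (hR : 0 < R) :
    (volume : Measure (EuclideanSpace ℝ (Fin n))).toSphere
        {θ : sphere (0 : EuclideanSpace ℝ (Fin n)) 1 |
          R • (θ : EuclideanSpace ℝ (Fin n)) ∈ C}
      * ENNReal.ofReal (R ^ n) ≤ n * volume C := by
  set Ω : Set (sphere (0 : EuclideanSpace ℝ (Fin n)) 1) :=
    {θ | R • (θ : EuclideanSpace ℝ (Fin n)) ∈ C} with hΩ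
  have hmeas : MeasurableSet Ω :=
    (hCclosed.preimage (by fun_prop : Continuous
      fun θ : sphere (0 : EuclideanSpace ℝ (Fin n)) 1 =>
        R • (θ : EuclideanSpace ℝ (Fin n)))).measurableSet
  have hcone : R • (Set.Ioo (0 : ℝ) 1 • ((↑) '' Ω : Set (EuclideanSpace ℝ (Fin n)))) ⊆ C := by
    rintro _ ⟨_, ⟨t, ht, _, ⟨θ, hθ, rfl⟩, rfl⟩, rfl⟩
    have h : t • R • (θ : EuclideanSpace ℝ (Fin n)) ∈ C :=
      hCconv.smul_mem_of_zero_mem h0 hθ ⟨ht.1.le, ht.2.le⟩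
    rwa [smul_comm] at h
  have hvol := measure_mono (μ := volume) hcone
  rw [Measure.addHaar_smul, finrank_euclideanSpace_fin, abs_of_pos (pow_pos hR n)] at hvol
  rw [Measure.toSphere_apply' _ hmeas, finrank_euclideanSpace_fin, mul_assoc,
    mul_comm (volume _) (ENNReal.ofReal _)]
  gcongr
end

section
/- Let n ≥ 2, let C be a convex subset of the open unit ball B of EuclideanSpace ℝ n which is relatively closed in B and contains the origin, and let d ∈ (0,1). Let Ω_d = {θ ∈ S^(n−1) : d·θ ∈ C}. Then σ(Ω_d) · ∫₀^(artanh d) (sinh t)^(n−1) dt ≤ hvol(C). -/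
/-!
The inequality comes from integration in polar coordinates. Since `C` is convex and contains `0`,
it contains the Euclidean cone `{r • θ : 0 < r ≤ d, θ ∈ Ω_d}`, and the density of `hvol` depends on
the norm only. Hence the hyperbolic volume of that cone factors as `σ(Ω_d)` times the radial
integral `∫₀^d r^(n-1) (1 - r²)^(-(n+1)/2) dr` (`toSphere_mul_radial_le_setLIntegral`). The
substitution `t = artanh r`, under which `sinh t = r / √(1 - r²)` and `dt = dr / (1 - r²)`, turns
the radial integral into `∫₀^(artanh d) sinh^(n-1) t dt`
(`integral_radial_eq_integral_sinh_pow`).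
-/

open Metric MeasureTheory

/-- The hyperbolic volume of a subset of the open unit ball in the Klein model of
hyperbolic `n`-space. -/
noncomputable def hvol (n : ℕ) (A : Set (EuclideanSpace ℝ (Fin n))) : ENNReal :=
  ∫⁻ x in A, ENNReal.ofReal ((1 - ‖x‖ ^ 2) ^ (-(((n : ℝ) + 1) / 2)))

/-- Inverse hyperbolic tangent: `artanh d = ½ log((1+d)/(1−d))`. -/
noncomputable def artanh (d : ℝ) : ℝ := Real.log ((1 + d) / (1 - d)) / 2

/-- For a radial density `g`, the mass of `C` is at least that of the cone of radius `d` over the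
set of directions `θ` with `d • θ ∈ C`, and polar coordinates factor the latter into a spherical
measure and a radial integral. -/
lemma toSphere_mul_radial_le_setLIntegral {E : Type*} [NormedAddCommGroup E] [NormedSpace ℝ E]
    [FiniteDimensional ℝ E] [MeasurableSpace E] [BorelSpace E] (μ : Measure E)
    [μ.IsAddHaarMeasure] {C : Set E} (hC : MeasurableSet C) {d : ℝ}
    (hcone : ∀ x : E, d • x ∈ C → ∀ r ∈ Set.Ioc 0 d, r • x ∈ C)
    {g : ℝ → ENNReal} (hg : Measurable g) :
    μ.toSphere {θ : sphere (0 : E) 1 | d • (θ : E) ∈ C}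
        * ∫⁻ r in Set.Ioc 0 d, ENNReal.ofReal (r ^ (Module.finrank ℝ E - 1)) * g r
      ≤ ∫⁻ x in C, g ‖x‖ ∂μ := by
  set Ω : Set (sphere (0 : E) 1) := {θ | d • (θ : E) ∈ C}
  have hΩ : MeasurableSet Ω :=
    (measurable_subtype_coe.const_smul d : Measurable fun θ : sphere (0 : E) 1 ↦ d • (θ : E)) hC
  have hgd : Measurable fun r : Set.Ioi (0 : ℝ) ↦ (Set.Iic d).indicator g (r : ℝ) :=
    (hg.indicator measurableSet_Iic).comp measurable_subtype_coe
  have hradial : ∫⁻ r : Set.Ioi (0 : ℝ), (Set.Iic d).indicator g r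
        ∂(Measure.volumeIoiPow (Module.finrank ℝ E - 1))
      = ∫⁻ r in Set.Ioc 0 d, ENNReal.ofReal (r ^ (Module.finrank ℝ E - 1)) * g r := by
    rw [Measure.volumeIoiPow, lintegral_withDensity_eq_lintegral_mul _ (by fun_prop) hgd]
    simp only [Pi.mul_apply]
    rw [lintegral_subtype_comap measurableSet_Ioi (fun r : ℝ ↦
        ENNReal.ofReal (r ^ (Module.finrank ℝ E - 1)) * (Set.Iic d).indicator g r),
      ← Set.Ioi_inter_Iic, Set.inter_comm, ← setLIntegral_indicator measurableSet_Iic]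
    congr 1 with r
    by_cases hr : r ∈ Set.Iic d <;> simp [hr]
  calc
    _ = (∫⁻ θ, Ω.indicator 1 θ ∂μ.toSphere)
          * ∫⁻ r : Set.Ioi (0 : ℝ), (Set.Iic d).indicator g r
            ∂(Measure.volumeIoiPow (Module.finrank ℝ E - 1)) := by
      rw [hradial, lintegral_indicator_one hΩ]
    _ = ∫⁻ p, Ω.indicator 1 p.1 * (Set.Iic d).indicator g (p.2 : ℝ)
          ∂(μ.toSphere.prod (Measure.volumeIoiPow (Module.finrank ℝ E - 1))) :=
      (lintegral_prod_mul (measurable_one.indicator hΩ).aemeasurable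
        hgd.aemeasurable).symm
    _ = ∫⁻ x : ({0}ᶜ : Set E), Ω.indicator 1 (homeomorphUnitSphereProd E x).1
          * (Set.Iic d).indicator g ((homeomorphUnitSphereProd E x).2 : ℝ) ∂(μ.comap (↑)) :=
      (μ.measurePreserving_homeomorphUnitSphereProd.lintegral_comp_emb
        (Homeomorph.measurableEmbedding _)
        (fun p ↦ Ω.indicator 1 p.1 * (Set.Iic d).indicator g (p.2 : ℝ))).symm
    _ ≤ ∫⁻ x : ({0}ᶜ : Set E), C.indicator (fun y ↦ g ‖y‖) x ∂(μ.comap (↑)) := by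
      refine lintegral_mono fun x ↦ ?_
      by_cases h1 : (homeomorphUnitSphereProd E x).1 ∈ Ω
      · by_cases h2 : ‖(x : E)‖ ≤ d
        · have hx : 0 < ‖(x : E)‖ := norm_pos_iff.2 x.2
          have hxC : (x : E) ∈ C := by
            have := hcone _ h1 ‖(x : E)‖ ⟨hx, h2⟩
            simpa [smul_smul, hx.ne'] using this
          simp [h1, h2, hxC]
        · simp [h2]
      · simp [h1]
    _ = ∫⁻ x in ({0}ᶜ : Set E), C.indicator (fun y ↦ g ‖y‖) x ∂μ :=
      lintegral_subtype_comap (measurableSet_singleton _).compl _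
    _ ≤ ∫⁻ x, C.indicator (fun y ↦ g ‖y‖) x ∂μ := setLIntegral_le_lintegral _ _
    _ = ∫⁻ x in C, g ‖x‖ ∂μ := lintegral_indicator hC _

lemma artanh_eq_real_artanh {x : ℝ} (hx : x ∈ Set.Icc (-1) 1) : artanh x = Real.artanh x := by
  rw [Real.artanh_eq_half_log hx, artanh]
  ring

lemma hasDerivAt_artanh {x : ℝ} (hx : x ∈ Set.Ioo (-1) 1) :
    HasDerivAt artanh (1 - x ^ 2)⁻¹ x := by
  have h1 : 1 + x ≠ 0 := by linarith [hx.1]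
  have h2 : 1 - x ≠ 0 := by linarith [hx.2]
  have h3 : 1 - x ^ 2 ≠ 0 := by
    rw [show 1 - x ^ 2 = (1 + x) * (1 - x) by ring]
    exact mul_ne_zero h1 h2
  have h := ((((hasDerivAt_id x).const_add 1).div ((hasDerivAt_id x).const_sub 1) h2).log
    (div_ne_zero h1 h2)).div_const 2
  refine h.congr_deriv ?_
  simp only [id, Pi.div_apply]
  field_simp
  ring

/-- The substitution `t = artanh r` in the radial integral of the hyperbolic volume density. -/
lemma integral_radial_eq_integral_sinh_pow {n : ℕ} (hn : 1 ≤ n) {d : ℝ} (hd : d ∈ Set.Ioo 0 1) :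
    ∫ r in (0 : ℝ)..d, r ^ (n - 1) * (1 - r ^ 2) ^ (-(((n : ℝ) + 1) / 2))
      = ∫ t in (0 : ℝ)..artanh d, Real.sinh t ^ (n - 1) := by
  have hmem : ∀ r ∈ Set.uIcc 0 d, r ∈ Set.Ioo (-1 : ℝ) 1 := fun r hr ↦ by
    rw [Set.uIcc_of_le hd.1.le] at hr
    exact ⟨by linarith [hr.1], hr.2.trans_lt hd.2⟩
  have hpos : ∀ r ∈ Set.uIcc 0 d, 0 < 1 - r ^ 2 := fun r hr ↦ by
    nlinarith [(hmem r hr).1, (hmem r hr).2]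
  have h0 : artanh 0 = 0 := by simp [artanh]
  have hsub := intervalIntegral.integral_comp_mul_deriv (a := 0) (b := d)
    (g := fun t ↦ Real.sinh t ^ (n - 1)) (fun r hr ↦ hasDerivAt_artanh (hmem r hr))
    (ContinuousOn.inv₀ (by fun_prop) fun r hr ↦ (hpos r hr).ne') (by fun_prop)
  rw [h0] at hsub
  rw [← hsub]
  refine intervalIntegral.integral_congr fun r hr ↦ ?_
  have hs := hpos r hr
  obtain ⟨m, rfl⟩ := Nat.exists_eq_add_of_le' hn
  simp only [Function.comp, Nat.add_sub_cancel]
  rw [artanh_eq_real_artanh (Set.Ioo_subset_Icc_self (hmem r hr)), Real.sinh_artanh (hmem r hr),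
    div_pow, Real.sqrt_eq_rpow, ← Real.rpow_natCast (_ ^ (1 / 2 : ℝ)), ← Real.rpow_mul hs.le,
    div_eq_mul_inv (r ^ m), ← Real.rpow_neg hs.le, mul_assoc, ← Real.rpow_neg_one (1 - r ^ 2),
    ← Real.rpow_add hs]
  congr 2
  push_cast
  ring

/-- Corollary `rgenmeas`/Lemma `Kmeas` (hyperbolic case, Klein model): if `C` is a convex
subset of the open unit ball, relatively closed in it and containing `0`, and
`Ω_d = {θ ∈ S^(n-1) : d•θ ∈ C}`, then
`σ(Ω_d) · ∫₀^{artanh d} sinh^{n-1} t dt ≤ hvol(C)`. -/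
theorem Kmeas (n : ℕ) (hn : 2 ≤ n) (C : Set (EuclideanSpace ℝ (Fin n)))
    (hCconv : Convex ℝ C) (hCsub : C ⊆ ball (0 : EuclideanSpace ℝ (Fin n)) 1)
    (hCrelcl : C = closure C ∩ ball (0 : EuclideanSpace ℝ (Fin n)) 1)
    (h0 : (0 : EuclideanSpace ℝ (Fin n)) ∈ C)
    (d : ℝ) (hd : d ∈ Set.Ioo (0 : ℝ) 1) :
    (volume : Measure (EuclideanSpace ℝ (Fin n))).toSphere
        {θ : sphere (0 : EuclideanSpace ℝ (Fin n)) 1 |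
          d • (θ : EuclideanSpace ℝ (Fin n)) ∈ C}
      * ENNReal.ofReal (∫ t in (0:ℝ)..artanh d, Real.sinh t ^ (n - 1)) ≤ hvol n C := by
  have hmeas : MeasurableSet C := by
    rw [hCrelcl]
    exact isClosed_closure.measurableSet.inter measurableSet_ball
  have hcone : ∀ x : EuclideanSpace ℝ (Fin n), d • x ∈ C → ∀ r ∈ Set.Ioc 0 d, r • x ∈ C := by
    intro x hx r hr
    have := hCconv.smul_mem_of_zero_mem h0 hx
      (t := r / d) ⟨div_nonneg hr.1.le hd.1.le, (div_le_one hd.1).2 hr.2⟩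
    rwa [smul_smul, div_mul_cancel₀ _ hd.1.ne'] at this
  have hpolar := toSphere_mul_radial_le_setLIntegral
    (volume : Measure (EuclideanSpace ℝ (Fin n))) hmeas hcone
    (g := fun r ↦ ENNReal.ofReal ((1 - r ^ 2) ^ (-(((n : ℝ) + 1) / 2)))) (by fun_prop)
  rw [finrank_euclideanSpace_fin] at hpolar
  have hpos : ∀ r ∈ Set.Icc 0 d, 0 < 1 - r ^ 2 := fun r hr ↦ by
    nlinarith [hr.1, hr.2, hd.2]
  have hint : IntervalIntegrable
      (fun r : ℝ ↦ r ^ (n - 1) * (1 - r ^ 2) ^ (-(((n : ℝ) + 1) / 2))) volume 0 d := by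
    refine ContinuousOn.intervalIntegrable ?_
    rw [Set.uIcc_of_le hd.1.le]
    exact (by fun_prop : ContinuousOn (fun r : ℝ ↦ r ^ (n - 1)) _).mul
      (ContinuousOn.rpow_const (by fun_prop) fun r hr ↦ Or.inl (hpos r hr).ne')
  rw [← integral_radial_eq_integral_sinh_pow (by lia) hd,
    intervalIntegral.integral_of_le hd.1.le, ofReal_integral_eq_lintegral_ofReal hint.1]
  · refine le_of_eq_of_le ?_ hpolar
    congr 1
    refine setLIntegral_congr_fun measurableSet_Ioc fun r hr ↦ ?_
    exact ENNReal.ofReal_mul (pow_nonneg hr.1.le _)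
  · filter_upwards [ae_restrict_mem measurableSet_Ioc] with r hr
    exact mul_nonneg (pow_nonneg hr.1.le _)
      (Real.rpow_nonneg (hpos r (Set.Ioc_subset_Icc_self hr)).le _)
end

section
/- (Double Cone Lemma) Let n ≥ 2 and 0 < r₀ < r₁ < r₂. Let ξ ∈ EuclideanSpace ℝ n with ‖ξ‖ = r₂, and let u be a unit vector with ∠(u, ξ) ≤ α_{r₀}(r₂, r₁). Then r₁·u belongs to the convex hull of closedBall(0, r₀) ∪ {ξ}. -/
/-!
Put `s₁ = √(r₁² - r₀²)` and `s₂ = √(r₂² - r₀²)`. Squaring shows that the cosine of the angle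
`α_{r₀}(r₂, r₁)` is `(s₁ s₂ + r₀²) / (r₁ r₂)`, so the angle hypothesis gives
`⟪r₁ u, ξ⟫ ≥ s₁ s₂ + r₀²` (`le_inner_of_angle_le_alphaAngle`).
A point `p` lies on a segment from the ball to `ξ` as soon as `‖p - t ξ‖ ≤ (1 - t) r₀` for some
`t ∈ [0, 1)` (`mem_convexHull_closedBall_union`). For `p = r₁ u` the square of this inequality reads
`s₁² - 2 t (⟪p, ξ⟫ - r₀²) + t² s₂² ≤ 0`; its left side is at most `(s₁ - t s₂)²`,
which vanishes for `t = s₁ / s₂ < 1`.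
-/

open Metric InnerProductGeometry

lemma mem_convexHull_closedBall_union {E : Type*} [NormedAddCommGroup E] [NormedSpace ℝ E]
    {p ξ : E} {r t : ℝ} (ht₀ : 0 ≤ t) (ht₁ : t < 1) (h : ‖p - t • ξ‖ ≤ (1 - t) * r) :
    p ∈ convexHull ℝ (closedBall (0 : E) r ∪ {ξ}) := by
  have hpos : 0 < 1 - t := by linarith
  have hq : (1 - t)⁻¹ • (p - t • ξ) ∈ closedBall (0 : E) r := by
    rw [mem_closedBall_zero_iff, norm_smul, Real.norm_of_nonneg (inv_pos.2 hpos).le,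
      inv_mul_le_iff₀ hpos]
    exact h
  have key := convex_convexHull ℝ (closedBall (0 : E) r ∪ {ξ})
    (subset_convexHull ℝ _ (Or.inl hq)) (subset_convexHull ℝ _ (Or.inr rfl))
    hpos.le ht₀ (by ring)
  rwa [smul_inv_smul₀ hpos.ne', sub_add_cancel] at key

lemma cos_alphaAngle {r₀ r₁ r₂ : ℝ} (h₀ : 0 < r₀) (h₁ : r₀ < r₁) (h₂ : r₁ < r₂) :
    Real.cos (alphaAngle r₀ r₂ r₁) =
      (√(r₁ ^ 2 - r₀ ^ 2) * √(r₂ ^ 2 - r₀ ^ 2) + r₀ ^ 2) / (r₂ * r₁) := by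
  have hr₁ : 0 < r₁ := h₀.trans h₁
  have hr₂ : 0 < r₂ := hr₁.trans h₂
  have e₁ : √(r₁ ^ 2 - r₀ ^ 2) ^ 2 = r₁ ^ 2 - r₀ ^ 2 := Real.sq_sqrt (by nlinarith)
  have e₂ : √(r₂ ^ 2 - r₀ ^ 2) ^ 2 = r₂ ^ 2 - r₀ ^ 2 := Real.sq_sqrt (by nlinarith)
  rw [alphaAngle, Real.cos_arcsin, Real.sqrt_eq_iff_mul_self_eq_of_pos (by positivity)]
  set s₁ := √(r₁ ^ 2 - r₀ ^ 2)
  set s₂ := √(r₂ ^ 2 - r₀ ^ 2)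
  field_simp
  linear_combination (s₂ ^ 2 + r₀ ^ 2) * e₁ + r₁ ^ 2 * e₂

lemma le_inner_of_angle_le_alphaAngle {E : Type*} [NormedAddCommGroup E] [InnerProductSpace ℝ E]
    {r₀ r₁ r₂ : ℝ} (h₀ : 0 < r₀) (h₁ : r₀ < r₁) (h₂ : r₁ < r₂) {ξ u : E}
    (hξ : ‖ξ‖ = r₂) (hu : ‖u‖ = 1) (hangle : angle u ξ ≤ alphaAngle r₀ r₂ r₁) :
    √(r₁ ^ 2 - r₀ ^ 2) * √(r₂ ^ 2 - r₀ ^ 2) + r₀ ^ 2 ≤ r₁ * inner ℝ u ξ := by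
  have hr₁ : 0 < r₁ := h₀.trans h₁
  have hr₂ : 0 < r₂ := hr₁.trans h₂
  have hα : alphaAngle r₀ r₂ r₁ ≤ Real.pi :=
    (Real.arcsin_le_pi_div_two _).trans (by linarith [Real.pi_pos])
  have hcos := Real.cos_le_cos_of_nonneg_of_le_pi (angle_nonneg u ξ) hα hangle
  rw [cos_alphaAngle h₀ h₁ h₂, cos_angle, hu, hξ, one_mul,
    div_le_div_iff₀ (by positivity) hr₂] at hcos
  nlinarith

/-- The Double Cone Lemma (`doubleconelem`): if `‖ξ‖ = r₂` and `u` is a unit vector with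
`∠(u, ξ) ≤ α_{r₀}(r₂, r₁)`, then `r₁ • u` lies in the cone
`H(ξ, r₀) = convexHull (closedBall 0 r₀ ∪ {ξ})`. -/
theorem doubleconelem (n : ℕ) (hn : 2 ≤ n) (r₀ r₁ r₂ : ℝ)
    (h₀ : 0 < r₀) (h₁ : r₀ < r₁) (h₂ : r₁ < r₂)
    (ξ u : EuclideanSpace ℝ (Fin n)) (hξ : ‖ξ‖ = r₂) (hu : ‖u‖ = 1)
    (hangle : InnerProductGeometry.angle u ξ ≤ alphaAngle r₀ r₂ r₁) :
    r₁ • u ∈ convexHull ℝ (closedBall (0 : EuclideanSpace ℝ (Fin n)) r₀ ∪ {ξ}) := by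
  have hr₁ : 0 < r₁ := h₀.trans h₁
  have hinner := le_inner_of_angle_le_alphaAngle h₀ h₁ h₂ hξ hu hangle
  have e₁ : √(r₁ ^ 2 - r₀ ^ 2) ^ 2 = r₁ ^ 2 - r₀ ^ 2 := Real.sq_sqrt (by nlinarith)
  have e₂ : √(r₂ ^ 2 - r₀ ^ 2) ^ 2 = r₂ ^ 2 - r₀ ^ 2 := Real.sq_sqrt (by nlinarith)
  have hs₂ : 0 < √(r₂ ^ 2 - r₀ ^ 2) := Real.sqrt_pos.2 (by nlinarith)
  have hlt : √(r₁ ^ 2 - r₀ ^ 2) < √(r₂ ^ 2 - r₀ ^ 2) :=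
    Real.sqrt_lt_sqrt (by nlinarith) (by nlinarith)
  have hs₁ := Real.sqrt_nonneg (r₁ ^ 2 - r₀ ^ 2)
  set s₁ := √(r₁ ^ 2 - r₀ ^ 2)
  set s₂ := √(r₂ ^ 2 - r₀ ^ 2)
  obtain ⟨t, ht⟩ : ∃ t, t = s₁ / s₂ := ⟨_, rfl⟩
  have hts : t * s₂ = s₁ := by rw [ht, div_mul_cancel₀ _ hs₂.ne']
  have ht₀ : 0 ≤ t := ht ▸ div_nonneg hs₁ hs₂.le
  have ht₁ : t < 1 := ht ▸ (div_lt_one hs₂).2 hlt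
  refine mem_convexHull_closedBall_union ht₀ ht₁
    (abs_le_of_sq_le_sq' ?_ (mul_nonneg (by linarith) h₀.le)).2
  rw [norm_sub_sq_real, norm_smul, norm_smul, hu, hξ, real_inner_smul_left, real_inner_smul_right,
    Real.norm_of_nonneg hr₁.le, Real.norm_of_nonneg ht₀]
  have hsq : (s₁ - t * s₂) ^ 2 = 0 := by rw [hts]; ring
  have hmul := mul_le_mul_of_nonneg_left hinner ht₀
  linear_combination 2 * hmul + hsq - e₁ - t ^ 2 * e₂
end

section
/- Let n ≥ 2, let C ⊆ EuclideanSpace ℝ n be convex with closedBall(0, r₀) ⊆ C, and let 0 < r₀ < r₁ < r₂. If θ and u are unit vectors with r₂·θ ∈ C and ∠(u, θ) ≤ α_{r₀}(r₂, r₁), then r₁·u ∈ C. In other words, the angular α_{r₀}(r₂, r₁)-neighborhood of Ω_{r₂}(C) = {θ ∈ S^(n−1) : r₂·θ ∈ C} is contained in Ω_{r₁}(C) = {θ ∈ S^(n−1) : r₁·θ ∈ C}. -/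
/-!
Put `A = √(r₂² - r₀²)`, `B = √(r₁² - r₀²)`, `p = r₁ • u`, `q = r₂ • θ`. Since
`(A² + r₀²)(B² + r₀²) = (A B + r₀²)² + r₀² (A - B)²`, the angle condition says exactly that
`⟪p, q⟫ ≥ A B + r₀²`. The point `p` lies in the convex hull of `q` and the ball of radius `r₀`
as soon as `‖p - l q‖ ≤ (1 - l) r₀` for some `l ∈ [0, 1)`, and squaring turns this into
`B² - 2 l (⟪p, q⟫ - r₀²) + l² A² ≤ 0`. The minimiser in the extremal case is `l = B / A`, which
works in general.
-/

open Metric InnerProductGeometry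

/-- The cosine of the extremal angle, from `cos (arcsin x) = √(1 - x²)`. -/
lemma le_cos_alphaAngle {r₀ r₁ r₂ : ℝ} (h₀ : 0 < r₀) (h₁ : r₀ < r₁) (h₂ : r₁ < r₂) :
    √(r₂ ^ 2 - r₀ ^ 2) * √(r₁ ^ 2 - r₀ ^ 2) + r₀ ^ 2 ≤
      r₂ * r₁ * Real.cos (alphaAngle r₀ r₂ r₁) := by
  have hA2 : √(r₂ ^ 2 - r₀ ^ 2) ^ 2 = r₂ ^ 2 - r₀ ^ 2 := Real.sq_sqrt (by nlinarith)
  have hB2 : √(r₁ ^ 2 - r₀ ^ 2) ^ 2 = r₁ ^ 2 - r₀ ^ 2 := Real.sq_sqrt (by nlinarith)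
  rw [alphaAngle, Real.cos_arcsin]
  set A := √(r₂ ^ 2 - r₀ ^ 2)
  set B := √(r₁ ^ 2 - r₀ ^ 2)
  have hpos : 0 < r₂ * r₁ := by apply mul_pos <;> linarith
  rw [← div_le_iff₀' hpos]
  apply Real.le_sqrt_of_sq_le
  rw [div_pow, div_pow, le_sub_iff_add_le, ← add_div, div_le_one (by positivity)]
  apply le_of_eq
  linear_combination (B ^ 2 + r₀ ^ 2) * hA2 + r₂ ^ 2 * hB2

/-- A convex set containing `q` and the ball of radius `r` contains every point that is within
`(1 - l) * r` of `l • q`. -/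
lemma mem_of_norm_sub_smul_le {E : Type*} [NormedAddCommGroup E] [NormedSpace ℝ E] {C : Set E}
    (hC : Convex ℝ C) {r l : ℝ} (hball : closedBall (0 : E) r ⊆ C) {p q : E} (hq : q ∈ C)
    (hl0 : 0 ≤ l) (hl1 : l < 1) (h : ‖p - l • q‖ ≤ (1 - l) * r) : p ∈ C := by
  have hpos : 0 < 1 - l := sub_pos.2 hl1
  have hy : (1 - l)⁻¹ • (p - l • q) ∈ C := by
    apply hball
    rw [mem_closedBall_zero_iff, norm_smul, norm_inv, Real.norm_of_nonneg hpos.le]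
    exact (inv_mul_le_iff₀ hpos).2 h
  have hmem := hC hq hy hl0 hpos.le (by ring)
  rwa [smul_inv_smul₀ hpos.ne', add_sub_cancel] at hmem

/-- Theorem `doubleconecor1` / Lemma `doublecone2`: if `C` is convex with
`closedBall 0 r₀ ⊆ C` and `0 < r₀ < r₁ < r₂`, then the angular
`α_{r₀}(r₂, r₁)`-neighborhood of `Ω_{r₂}(C)` is contained in `Ω_{r₁}(C)`. -/
theorem doubleconecor (n : ℕ) (hn : 2 ≤ n) (C : Set (EuclideanSpace ℝ (Fin n)))
    (hCconv : Convex ℝ C) (r₀ r₁ r₂ : ℝ)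
    (h₀ : 0 < r₀) (h₁ : r₀ < r₁) (h₂ : r₁ < r₂)
    (hball : closedBall (0 : EuclideanSpace ℝ (Fin n)) r₀ ⊆ C)
    (θ u : EuclideanSpace ℝ (Fin n)) (hθ : ‖θ‖ = 1) (hu : ‖u‖ = 1)
    (hθC : r₂ • θ ∈ C)
    (hangle : InnerProductGeometry.angle u θ ≤ alphaAngle r₀ r₂ r₁) :
    r₁ • u ∈ C := by
  have hcos := Real.cos_le_cos_of_nonneg_of_le_pi (angle_nonneg u θ)
    ((Real.arcsin_le_pi_div_two _).trans (by linarith [Real.pi_pos])) hangle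
  rw [cos_angle, hu, hθ, mul_one, div_one] at hcos
  have hpos : 0 < r₂ * r₁ := by apply mul_pos <;> linarith
  have hs := (le_cos_alphaAngle h₀ h₁ h₂).trans (mul_le_mul_of_nonneg_left hcos hpos.le)
  have hA2 : √(r₂ ^ 2 - r₀ ^ 2) ^ 2 = r₂ ^ 2 - r₀ ^ 2 := Real.sq_sqrt (by nlinarith)
  have hB2 : √(r₁ ^ 2 - r₀ ^ 2) ^ 2 = r₁ ^ 2 - r₀ ^ 2 := Real.sq_sqrt (by nlinarith)
  have hB0 : 0 ≤ √(r₁ ^ 2 - r₀ ^ 2) := Real.sqrt_nonneg _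
  have hA0 : 0 < √(r₂ ^ 2 - r₀ ^ 2) := Real.sqrt_pos.2 (by nlinarith)
  have hBA : √(r₁ ^ 2 - r₀ ^ 2) < √(r₂ ^ 2 - r₀ ^ 2) :=
    Real.sqrt_lt_sqrt (by nlinarith) (by nlinarith)
  set A := √(r₂ ^ 2 - r₀ ^ 2)
  set B := √(r₁ ^ 2 - r₀ ^ 2)
  obtain ⟨l, hl⟩ : ∃ l, l = B / A := ⟨_, rfl⟩
  have hl0 : 0 ≤ l := hl ▸ div_nonneg hB0 hA0.le
  have hl1 : l < 1 := hl ▸ (div_lt_one hA0).2 hBA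
  have hlA : B = l * A := by rw [hl, div_mul_cancel₀ _ hA0.ne']
  refine mem_of_norm_sub_smul_le hCconv hball hθC hl0 hl1 ?_
  refine (sq_le_sq₀ (norm_nonneg _) (mul_nonneg (by linarith) h₀.le)).1 ?_
  rw [norm_sub_sq_real, smul_smul, norm_smul, norm_smul, hu, hθ, mul_one, mul_one,
    Real.norm_eq_abs, Real.norm_eq_abs, sq_abs, sq_abs, real_inner_smul_left,
    real_inner_smul_right]
  have h := mul_le_mul_of_nonneg_left hs hl0
  rw [hlA] at hB2 h
  linear_combination 2 * h - hB2 - l ^ 2 * hA2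
end

section
/- Let n ≥ 2 and let C be a convex subset of the open unit ball B of EuclideanSpace ℝ n such that closedBall(0, r₀) ⊆ C for some r₀ ∈ (0,1) and hvol(C) < ∞. Let L = closure(C) ∩ S^(n−1) be the limit set of C. Then there is a constant K > 0 such that for every ε ∈ (0,1), σ({x ∈ S^(n−1) : ∃ y ∈ L, ‖x − y‖ < ε}) ≤ K · ε^((n−1)/2). In particular, the upper Minkowski dimension of L is at most (n−1)/2. -/
/-!
Write `η = r₀ / 2` and fix a scale `s ∈ (0, 1)`. If `y` is a limit point of `C`, then by convexity
`C` contains the ball of radius `2 η s` about `(1 - s) y`, since `ball 0 (2 η)` lies in the interior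
of `C`. Hence `C` contains the shell of all `t u` with `1 - s ≤ t < 1 - s + η s` and `u` a unit
vector within `η s` of the limit set `L`. The Lebesgue measure of this shell is at least a constant
times `s · σ(L_{η s})`, and the hyperbolic density there is at least `(2 s)^(-(n+1)/2)`, so
`s^(-(n-1)/2) · σ(L_{η s})` is bounded by a constant times `hvol C`. Taking `s = ε / η` gives the
estimate for `ε < η`; for the remaining `ε` the total mass of the sphere is a sufficient bound.

The containment is `shell_mem`, the Lebesgue measure of the shell is `shell_volume_ge`, and the
two are combined with the density bound in `cone_volume_le`.
-/

open Metric MeasureTheory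

open scoped Pointwise in
/-- A shell `{t u : a ≤ t < b, u ∈ A}` over a set `A` has at least `bⁿ - aⁿ` times the volume of
the cone over `A`; `A` need not consist of unit vectors, nor be measurable. -/
lemma shell_volume_ge (n : ℕ) (A : Set (EuclideanSpace ℝ (Fin n))) (a b : ℝ) (ha : 0 < a)
    (hab : a < b) :
    ENNReal.ofReal (b ^ n) * volume (Set.Ioo (0 : ℝ) 1 • A) ≤
      ENNReal.ofReal (a ^ n) * volume (Set.Ioo (0 : ℝ) 1 • A)
        + volume (Set.Ico a b • A) := by
  have hb : 0 < b := ha.trans hab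
  have hscale : ∀ c : ℝ, 0 < c → volume (c • (Set.Ioo (0 : ℝ) 1 • A))
      = ENNReal.ofReal (c ^ n) * volume (Set.Ioo (0 : ℝ) 1 • A) := by
    intro c hc
    rw [Measure.addHaar_smul, finrank_euclideanSpace, Fintype.card_fin,
      abs_of_nonneg (pow_nonneg hc.le n)]
  rw [← hscale a ha, ← hscale b hb]
  refine (measure_mono ?_).trans (measure_union_le _ _)
  rintro _ ⟨_, ⟨t, ht, u, hu, rfl⟩, rfl⟩
  simp only [smul_smul]
  rcases lt_or_ge (b * t) a with h | h
  · left
    refine ⟨(b * t / a) • u, Set.smul_mem_smul ⟨?_, ?_⟩ hu, ?_⟩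
    · have := ht.1
      positivity
    · rwa [div_lt_one ha]
    · simp only [smul_smul]
      congr 1
      field_simp
  · right
    exact Set.smul_mem_smul ⟨h, by nlinarith [ht.2]⟩ hu

/-- Over the spherical `η s`-neighborhood of the limit set, `C` contains the points at depth
between `(1 - η) s` and `s` below the sphere; such a point lies in the ball of radius `2 η s`
about `(1 - s) y`, a ball of the convex hull of `y` and `closedBall 0 (2 η)`. -/
lemma shell_mem {n : ℕ} {C : Set (EuclideanSpace ℝ (Fin n))} (hCconv : Convex ℝ C)
    {η : ℝ} (hball : closedBall (0 : EuclideanSpace ℝ (Fin n)) (2 * η) ⊆ C)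
    {s : ℝ} (hs0 : 0 < s) (hs1 : s < 1) {u y : EuclideanSpace ℝ (Fin n)} (hu : ‖u‖ = 1)
    (hy : y ∈ closure C) (huy : ‖u - y‖ < η * s) {t : ℝ} (ht : 1 - s ≤ t)
    (ht' : t < 1 - s + η * s) : t • u ∈ C := by
  set z := s⁻¹ • (t • u - (1 - s) • y) with hz
  have hnorm : ‖t • u - (1 - s) • y‖ < 2 * η * s := by
    have h1 : t • u - (1 - s) • y = (t - (1 - s)) • u + (1 - s) • (u - y) := by module
    have h2 : ‖(t - (1 - s)) • u‖ = t - (1 - s) := by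
      rw [norm_smul, hu, Real.norm_of_nonneg (by linarith), mul_one]
    have h3 : ‖(1 - s) • (u - y)‖ ≤ ‖u - y‖ := by
      rw [norm_smul, Real.norm_of_nonneg (by linarith)]
      nlinarith [norm_nonneg (u - y)]
    rw [h1]
    linarith [norm_add_le ((t - (1 - s)) • u) ((1 - s) • (u - y))]
  have hzint : z ∈ interior C := by
    refine interior_mono hball (ball_subset_interior_closedBall ?_)
    rw [mem_ball_zero_iff, hz, norm_smul, norm_inv, Real.norm_of_nonneg hs0.le,
      inv_mul_lt_iff₀ hs0]
    linarith
  have hmem := hCconv.combo_interior_closure_mem_interior hzint hy hs0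
    (sub_nonneg.2 hs1.le) (by ring)
  have heq : s • z + (1 - s) • y = t • u := by
    rw [hz, smul_inv_smul₀ hs0.ne']
    abel
  rw [heq] at hmem
  exact interior_subset hmem

open scoped Pointwise in
/-- The estimate at a single scale: the shell over the set `A` of unit vectors within `η s` of the
limit set has Lebesgue measure at least `ηⁿ s` times that of the cone over `A`, and the hyperbolic
density on it is at least `(2 s)^(-(n+1)/2)`. -/
lemma cone_volume_le (n : ℕ) (hn : 2 ≤ n) {C : Set (EuclideanSpace ℝ (Fin n))}
    (hCconv : Convex ℝ C)
    {η : ℝ} (hη0 : 0 < η) (hη1 : η < 1)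
    (hball : closedBall (0 : EuclideanSpace ℝ (Fin n)) (2 * η) ⊆ C)
    (hfin : hvol n C < ⊤) {s : ℝ} (hs0 : 0 < s) (hs1 : s < 1)
    {A : Set (EuclideanSpace ℝ (Fin n))}
    (hA : ∀ u ∈ A, ‖u‖ = 1 ∧ ∃ y ∈ closure C, ‖u - y‖ < η * s) :
    (2 * s) ^ (-(((n : ℝ) + 1) / 2)) * (η ^ n * s * (volume (Set.Ioo (0 : ℝ) 1 • A)).toReal)
      ≤ (hvol n C).toReal := by
  set b := 1 - s + η * s with hb
  have hab : 1 - s < b := by rw [hb]; nlinarith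
  have hb1 : b < 1 := by rw [hb]; nlinarith
  have hηb : η ≤ b := by rw [hb]; nlinarith
  set W := Set.Ico (1 - s) b • A with hW
  have hWC : W ⊆ C := by
    rintro _ ⟨t, ht, u, hu, rfl⟩
    obtain ⟨hu1, y, hy, huy⟩ := hA u hu
    exact shell_mem hCconv hball hs0 hs1 hu1 hy huy ht.1 ht.2
  have hdens : ENNReal.ofReal ((2 * s) ^ (-(((n : ℝ) + 1) / 2))) * volume W ≤ hvol n C := by
    rw [← setLIntegral_const, hvol]
    refine le_trans (setLIntegral_mono (by fun_prop) ?_) (lintegral_mono_set hWC)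
    rintro _ ⟨t, ht, u, hu, rfl⟩
    have ht0 : 0 < t := by linarith [ht.1]
    have hnt : ‖t • u‖ = t := by
      rw [norm_smul, (hA u hu).1, Real.norm_of_nonneg ht0.le, mul_one]
    simp only [hnt]
    have ht1 := ht.1
    have ht2 := ht.2
    refine ENNReal.ofReal_le_ofReal (Real.rpow_le_rpow_of_nonpos ?_ ?_ ?_)
    · nlinarith
    · nlinarith
    · have : (0 : ℝ) ≤ n := n.cast_nonneg
      linarith
  have hcone : volume (Set.Ioo (0 : ℝ) 1 • A) ≠ ⊤ := by
    refine ((measure_mono ?_).trans_lt (measure_ball_lt_top (x := 0) (r := 1))).ne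
    rintro _ ⟨t, ht, u, hu, rfl⟩
    rw [mem_ball_zero_iff]
    simp only [norm_smul, (hA u hu).1, Real.norm_of_nonneg ht.1.le, mul_one]
    exact ht.2
  have hpos : 0 < (2 * s) ^ (-(((n : ℝ) + 1) / 2)) := Real.rpow_pos_of_pos (by linarith) _
  have hWfin : volume W ≠ ⊤ := by
    intro h
    rw [h, ENNReal.mul_top (by simpa using hpos)] at hdens
    exact absurd hdens (not_le.2 hfin)
  have hshell := ENNReal.toReal_mono
    (ENNReal.add_ne_top.2 ⟨ENNReal.mul_ne_top ENNReal.ofReal_ne_top hcone, hWfin⟩)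
    (shell_volume_ge n A (1 - s) b (by linarith) hab)
  rw [ENNReal.toReal_add (ENNReal.mul_ne_top ENNReal.ofReal_ne_top hcone) hWfin,
    ENNReal.toReal_mul, ENNReal.toReal_mul,
    ENNReal.toReal_ofReal (pow_nonneg (by linarith) n),
    ENNReal.toReal_ofReal (pow_nonneg (by linarith) n)] at hshell
  have hdens' := ENNReal.toReal_mono hfin.ne hdens
  rw [ENNReal.toReal_mul, ENNReal.toReal_ofReal hpos.le] at hdens'
  refine le_trans (mul_le_mul_of_nonneg_left ?_ hpos.le) hdens'
  have hpow : η ^ n * s ≤ b ^ n - (1 - s) ^ n := by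
    obtain ⟨k, rfl⟩ : ∃ k, n = k + 1 := ⟨n - 1, by omega⟩
    have h1 : η ^ k ≤ b ^ k := pow_le_pow_left₀ hη0.le hηb k
    have h2 : (1 - s) ^ k ≤ b ^ k := pow_le_pow_left₀ (by linarith) hab.le k
    have h3 : η ^ k * (η * s) ≤ b ^ k * (η * s) := mul_le_mul_of_nonneg_right h1 (by positivity)
    have h4 : (1 - s) ^ k * (1 - s) ≤ b ^ k * (1 - s) :=
      mul_le_mul_of_nonneg_right h2 (by linarith)
    have h5 : b ^ k * b = b ^ k * (1 - s) + b ^ k * (η * s) := by rw [hb]; ring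
    rw [pow_succ, pow_succ, pow_succ]
    linarith
  have := mul_le_mul_of_nonneg_right hpow
    (ENNReal.toReal_nonneg (a := volume (Set.Ioo (0 : ℝ) 1 • A)))
  linarith

/-- Theorem `hdimest` (quantitative form): if `C` is a convex subset of the open unit ball
(Klein model) containing a ball around the origin and of finite hyperbolic volume, then the
spherical measure of the `ε`-neighborhood of its limit set `L = closure C ∩ S^{n-1}` is
`O(ε^{(n-1)/2})`; in particular the upper Minkowski dimension of `L` is at most `(n-1)/2`. -/
theorem hdimest (n : ℕ) (hn : 2 ≤ n) (C : Set (EuclideanSpace ℝ (Fin n)))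
    (hCconv : Convex ℝ C) (hCsub : C ⊆ ball (0 : EuclideanSpace ℝ (Fin n)) 1)
    (r₀ : ℝ) (hr₀ : r₀ ∈ Set.Ioo (0 : ℝ) 1)
    (hball : closedBall (0 : EuclideanSpace ℝ (Fin n)) r₀ ⊆ C)
    (hfin : hvol n C < ⊤) :
    ∃ K : ℝ, 0 < K ∧ ∀ ε ∈ Set.Ioo (0 : ℝ) 1,
      (volume : Measure (EuclideanSpace ℝ (Fin n))).toSphere
          {x : sphere (0 : EuclideanSpace ℝ (Fin n)) 1 |
            ∃ y ∈ closure C ∩ sphere (0 : EuclideanSpace ℝ (Fin n)) 1,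
              ‖(x : EuclideanSpace ℝ (Fin n)) - y‖ < ε}
        ≤ ENNReal.ofReal (K * ε ^ (((n : ℝ) - 1) / 2)) := by
  obtain ⟨hr0, hr1⟩ := hr₀
  set η := r₀ / 2 with hη
  have hη0 : 0 < η := by positivity
  have hη1 : η < 1 := by linarith
  have hball' : closedBall (0 : EuclideanSpace ℝ (Fin n)) (2 * η) ⊆ C := by
    rwa [show 2 * η = r₀ by rw [hη]; ring]
  set q : ℝ := ((n : ℝ) - 1) / 2 with hq
  have hq0 : 0 ≤ q := by
    have : (2 : ℝ) ≤ n := by exact_mod_cast hn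
    rw [hq]; linarith
  set σ := (volume : Measure (EuclideanSpace ℝ (Fin n))).toSphere with hσ
  set H := (hvol n C).toReal with hH
  have hH0 : 0 ≤ H := ENNReal.toReal_nonneg
  set K₁ : ℝ := n * (H * 2 ^ (((n : ℝ) + 1) / 2) / η ^ n) with hK₁
  have hK₁0 : 0 ≤ K₁ := by positivity
  set K₂ : ℝ := (σ Set.univ).toReal with hK₂
  have hK₂0 : 0 ≤ K₂ := ENNReal.toReal_nonneg
  refine ⟨(K₁ + K₂ + 1) / η ^ q, by positivity, ?_⟩
  rintro ε ⟨hε0, hε1⟩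
  have hεη : (K₁ + K₂ + 1) / η ^ q * ε ^ q = (K₁ + K₂ + 1) * (ε / η) ^ q := by
    rw [Real.div_rpow hε0.le hη0.le]
    ring
  rw [hεη]
  set S : Set (sphere (0 : EuclideanSpace ℝ (Fin n)) 1) := {x |
            ∃ y ∈ closure C ∩ sphere (0 : EuclideanSpace ℝ (Fin n)) 1,
              ‖(x : EuclideanSpace ℝ (Fin n)) - y‖ < ε} with hS
  set s := ε / η with hs
  have hs0 : 0 < s := by positivity
  have hsq : 0 < s ^ q := Real.rpow_pos_of_pos hs0 q
  rcases lt_or_ge s 1 with hs1 | hs1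
  · have hSopen : IsOpen S := by
      have : S = ⋃ y ∈ closure C ∩ sphere (0 : EuclideanSpace ℝ (Fin n)) 1,
          {x : sphere (0 : EuclideanSpace ℝ (Fin n)) 1 |
            ‖(x : EuclideanSpace ℝ (Fin n)) - y‖ < ε} := by
        ext x
        simp [hS]
      rw [this]
      exact isOpen_biUnion fun y _ => isOpen_lt (by fun_prop) continuous_const
    rw [hσ, Measure.toSphere_apply' _ hSopen.measurableSet, finrank_euclideanSpace,
      Fintype.card_fin]
    have key := cone_volume_le n hn hCconv hη0 hη1 hball' hfin hs0 hs1
      (A := (Subtype.val : sphere (0 : EuclideanSpace ℝ (Fin n)) 1 → _) '' S) (by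
        rintro _ ⟨x, ⟨y, hy, hxy⟩, rfl⟩
        exact ⟨norm_eq_of_mem_sphere x, y, hy.1, by rwa [hs, mul_div_cancel₀ _ hη0.ne']⟩)
    have hfin' : open scoped Pointwise in volume (Set.Ioo (0 : ℝ) 1 •
        ((Subtype.val : sphere (0 : EuclideanSpace ℝ (Fin n)) 1 → _) '' S)) ≠ ⊤ := by
      refine ((measure_mono ?_).trans_lt (measure_ball_lt_top (x := 0) (r := 1))).ne
      rintro _ ⟨t, ht, _, ⟨x, -, rfl⟩, rfl⟩
      rw [mem_ball_zero_iff]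
      simp only [norm_smul, norm_eq_of_mem_sphere, Real.norm_of_nonneg ht.1.le, mul_one]
      exact ht.2
    rw [← ENNReal.ofReal_toReal hfin', ← ENNReal.ofReal_natCast,
      ← ENNReal.ofReal_mul (Nat.cast_nonneg n)]
    refine ENNReal.ofReal_le_ofReal ?_
    set m := (open scoped Pointwise in volume (Set.Ioo (0 : ℝ) 1 •
        ((Subtype.val : sphere (0 : EuclideanSpace ℝ (Fin n)) 1 → _) '' S))).toReal
    -- The exponent `(n-1)/2` arises as `(n+1)/2 - 1`: density against thickness of the shell.
    have hsplit : (2 * s) ^ (-(((n : ℝ) + 1) / 2)) * s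
        = (2 ^ (((n : ℝ) + 1) / 2) * s ^ q)⁻¹ := by
      have hexp : ((n : ℝ) + 1) / 2 = q + 1 := by rw [hq]; ring
      rw [Real.rpow_neg (by positivity), Real.mul_rpow (by norm_num) hs0.le, hexp,
        Real.rpow_add hs0, Real.rpow_one]
      field_simp
    have h2 : (0 : ℝ) < 2 ^ (((n : ℝ) + 1) / 2) := by positivity
    have hkey : (2 ^ (((n : ℝ) + 1) / 2) * s ^ q)⁻¹ * (η ^ n * m) ≤ H := by
      rw [← hsplit]
      linarith
    rw [inv_mul_le_iff₀ (by positivity)] at hkey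
    have hm : m ≤ H * 2 ^ (((n : ℝ) + 1) / 2) / η ^ n * s ^ q := by
      rw [div_mul_eq_mul_div, le_div_iff₀ (by positivity)]
      linarith
    have hnm : n * m ≤ K₁ * s ^ q := by
      rw [hK₁, mul_assoc]
      exact mul_le_mul_of_nonneg_left hm (Nat.cast_nonneg n)
    nlinarith
  -- For `ε ≥ η` the total mass of the sphere suffices.
  · refine (measure_mono (Set.subset_univ S)).trans ?_
    rw [← ENNReal.ofReal_toReal (measure_ne_top σ Set.univ)]
    refine ENNReal.ofReal_le_ofReal ?_
    have : 1 ≤ s ^ q := Real.one_le_rpow hs1 hq0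
    nlinarith
end

section
/- Let n ≥ 2 and let C be a convex subset of the open unit ball B of EuclideanSpace ℝ n such that closedBall(0, r₀) ⊆ C for some r₀ ∈ (0,1) and hvol(C) < ∞. Then the Hausdorff dimension of the limit set L = closure(C) ∩ S^(n−1) satisfies dimH L ≤ (n−1)/2. -/
/-!
The limit set has finite `(n-1)/2`-dimensional Hausdorff measure, by a packing argument.
Write `s = (n-1)/2`. If `ξ` is a limit point and `0 < δ ≤ 1/2`, convexity puts the Euclidean ball
of centre `(1-δ)ξ` and radius `δ r₀` inside `C`. There `1 - ‖x‖² ≤ 4δ`, so this ball has hyperbolic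
volume at least `(4δ)^(-(n+1)/2) (δ r₀)^n ω = c δ^s`, where `ω` is the Lebesgue measure of the unit
ball and `c > 0` depends only on `n` and `r₀`. The balls attached to `4δ`-separated limit points
are disjoint, hence a `4δ`-separated set of limit points has at most `hvol(C) / (c δ^s)` elements.
Taking it maximal, the closed balls of radius `4δ` about its points cover the limit set, and the
sum of the `s`-th powers of their diameters is at most `8^s hvol(C) / c`, uniformly in `δ`.
-/

open Metric MeasureTheory

open Filter Topology

/-- A maximal `ε`-separated subset of a compact set is a finite `ε`-net. -/
lemma exists_finset_separated_cover {X : Type*} [MetricSpace X] {s : Set X} (hs : IsCompact s)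
    {ε : ℝ} (hε : 0 < ε) :
    ∃ T : Finset X, (↑T ⊆ s) ∧ ((T : Set X).Pairwise fun x y => ε < dist x y) ∧
      s ⊆ ⋃ y : T, closedBall (y : X) ε := by
  lift ε to NNReal using hε.le
  have hε' : (0 : NNReal) < ε := by exact_mod_cast hε
  have htop : packingNumber ε s ≠ ⊤ := by
    obtain ⟨N, hNs, hNf, hN⟩ :=
      exists_finite_isCover_of_isCompact (ε := ε / 2) (by positivity) hs
    have h1 := packingNumber_two_mul_le_externalCoveringNumber (ε / 2) s
    rw [mul_div_cancel₀ _ two_ne_zero] at h1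
    exact ((h1.trans hN.externalCoveringNumber_le_encard).trans_lt
      (Set.encard_lt_top_iff.2 hNf)).ne
  have hfin : (maximalSeparatedSet ε s).Finite := by
    rw [← Set.encard_ne_top_iff, encard_maximalSeparatedSet htop]
    exact htop
  refine ⟨hfin.toFinset, by simpa using maximalSeparatedSet_subset, ?_, ?_⟩
  · intro x hx y hy hxy
    have h : (ε : ENNReal) < edist x y :=
      isSeparated_maximalSeparatedSet (by simpa using hx) (by simpa using hy) hxy
    rw [edist_nndist, ENNReal.coe_lt_coe] at h
    exact_mod_cast h
  · have h := (isCover_maximalSeparatedSet htop).subset_iUnion_closedBall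
    intro x hx
    simpa using h hx

section

variable {n : ℕ} {C : Set (EuclideanSpace ℝ (Fin n))} {r₀ δ : ℝ} {ξ : EuclideanSpace ℝ (Fin n)}

/-- The ball is the image of `ball 0 r₀` under the homothety `y ↦ δ y + (1 - δ) ξ`. -/
lemma ball_subset_of_mem_closure (hCconv : Convex ℝ C)
    (hball : closedBall (0 : EuclideanSpace ℝ (Fin n)) r₀ ⊆ C) (hδ : 0 < δ) (hδ' : δ ≤ 1 / 2)
    (hξ : ξ ∈ closure C) : ball ((1 - δ) • ξ) (δ * r₀) ⊆ C := by
  intro x hx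
  have hy : δ⁻¹ • (x - (1 - δ) • ξ) ∈ interior C := by
    refine interior_maximal (ball_subset_closedBall.trans hball) isOpen_ball ?_
    rw [mem_ball_zero_iff, norm_smul, norm_inv, Real.norm_of_nonneg hδ.le, ← dist_eq_norm,
      inv_mul_lt_iff₀ hδ]
    exact hx
  have h := hCconv.combo_interior_closure_mem_interior hy hξ hδ (b := 1 - δ) (by linarith)
    (by ring)
  rw [smul_inv_smul₀ hδ.ne', sub_add_cancel] at h
  exact interior_subset h

/-- On the ball `1 - δ - δ r₀ ≤ ‖x‖ < 1`, so `0 < 1 - ‖x‖² ≤ 4δ` bounds the density from below. -/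
lemma hvol_ball_lower (hCsub : C ⊆ ball (0 : EuclideanSpace ℝ (Fin n)) 1)
    (hr₀ : r₀ ∈ Set.Ioo (0 : ℝ) 1) (hδ : 0 < δ) (hδ' : δ ≤ 1 / 2) (hξ : ‖ξ‖ = 1)
    (hsub : ball ((1 - δ) • ξ) (δ * r₀) ⊆ C) :
    ENNReal.ofReal (4 ^ (-(((n : ℝ) + 1) / 2)) * r₀ ^ n *
        (volume (ball (0 : EuclideanSpace ℝ (Fin n)) 1)).toReal * δ ^ (((n : ℝ) - 1) / 2))
      ≤ hvol n (ball ((1 - δ) • ξ) (δ * r₀)) := by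
  have hr := hr₀.1
  have hδr : 0 < δ * r₀ := mul_pos hδ hr
  have hfinite : volume (ball (0 : EuclideanSpace ℝ (Fin n)) 1) ≠ ⊤ := measure_ball_lt_top.ne
  calc _ = ENNReal.ofReal ((4 * δ) ^ (-(((n : ℝ) + 1) / 2))) *
        volume (ball ((1 - δ) • ξ) (δ * r₀)) := by
        rw [Measure.addHaar_ball_of_pos _ _ hδr, finrank_euclideanSpace_fin,
          ← ENNReal.ofReal_toReal hfinite, ← ENNReal.ofReal_mul (by positivity),
          ← ENNReal.ofReal_mul (by positivity), ENNReal.toReal_ofReal ENNReal.toReal_nonneg]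
        congr 1
        have : δ ^ (((n : ℝ) - 1) / 2) = δ ^ (-(((n : ℝ) + 1) / 2)) * δ ^ n := by
          rw [← Real.rpow_natCast δ n, ← Real.rpow_add hδ]
          congr 1
          ring
        rw [this, Real.mul_rpow (by norm_num) hδ.le, mul_pow]
        ring
    _ = ∫⁻ _ in ball ((1 - δ) • ξ) (δ * r₀), ENNReal.ofReal ((4 * δ) ^ (-(((n : ℝ) + 1) / 2))) := by
        rw [setLIntegral_const]
    _ ≤ _ := by
        refine setLIntegral_mono' measurableSet_ball fun x hx => ENNReal.ofReal_le_ofReal ?_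
        have hx1 : ‖x‖ < 1 := mem_ball_zero_iff.1 (hCsub (hsub hx))
        have hx0 := norm_nonneg x
        have hnorm : ‖(1 - δ) • ξ‖ = 1 - δ := by
          rw [norm_smul, hξ, mul_one, Real.norm_of_nonneg (by linarith)]
        have hd : ‖(1 - δ) • ξ‖ - ‖x‖ ≤ ‖(1 - δ) • ξ - x‖ := norm_sub_norm_le _ _
        rw [mem_ball, dist_comm, dist_eq_norm] at hx
        have hlow : 1 - ‖x‖ ≤ 2 * δ := by nlinarith [hr₀.2]
        exact Real.rpow_le_rpow_of_nonpos (by nlinarith) (by nlinarith)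
          (neg_nonpos.2 (by positivity))

/-- The factor `1 - δ ≥ 1/2` shrinks distances between centres to more than `2δ`, which
exceeds the sum of the radii. -/
lemma disjoint_balls (hr₀ : r₀ ∈ Set.Ioo (0 : ℝ) 1) (hδ : 0 < δ) (hδ' : δ ≤ 1 / 2)
    {η : EuclideanSpace ℝ (Fin n)} (h : 4 * δ < dist ξ η) :
    Disjoint (ball ((1 - δ) • ξ) (δ * r₀)) (ball ((1 - δ) • η) (δ * r₀)) := by
  refine ball_disjoint_ball ?_
  rw [dist_smul₀, Real.norm_of_nonneg (by linarith)]
  nlinarith [hr₀.2]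

lemma card_mul_le_hvol (hCconv : Convex ℝ C)
    (hCsub : C ⊆ ball (0 : EuclideanSpace ℝ (Fin n)) 1) (hr₀ : r₀ ∈ Set.Ioo (0 : ℝ) 1)
    (hball : closedBall (0 : EuclideanSpace ℝ (Fin n)) r₀ ⊆ C) (hδ : 0 < δ) (hδ' : δ ≤ 1 / 2)
    {T : Finset (EuclideanSpace ℝ (Fin n))}
    (hT : (T : Set (EuclideanSpace ℝ (Fin n))) ⊆ closure C ∩ sphere 0 1)
    (hsep : (T : Set (EuclideanSpace ℝ (Fin n))).Pairwise fun x y => 4 * δ < dist x y) :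
    T.card * ENNReal.ofReal (4 ^ (-(((n : ℝ) + 1) / 2)) * r₀ ^ n *
        (volume (ball (0 : EuclideanSpace ℝ (Fin n)) 1)).toReal * δ ^ (((n : ℝ) - 1) / 2))
      ≤ hvol n C := by
  have hsub : ∀ ξ ∈ T, ball ((1 - δ) • ξ) (δ * r₀) ⊆ C := fun ξ hξ =>
    ball_subset_of_mem_closure hCconv hball hδ hδ' (hT hξ).1
  rw [← nsmul_eq_mul]
  calc _ ≤ ∑ ξ ∈ T, hvol n (ball ((1 - δ) • ξ) (δ * r₀)) :=
        Finset.card_nsmul_le_sum _ _ _ fun ξ hξ =>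
          hvol_ball_lower hCsub hr₀ hδ hδ' (mem_sphere_zero_iff_norm.1 (hT hξ).2) (hsub ξ hξ)
    _ = hvol n (⋃ ξ ∈ T, ball ((1 - δ) • ξ) (δ * r₀)) := by
        refine (lintegral_biUnion_finset ?_ (fun _ _ => measurableSet_ball) _).symm
        exact fun ξ hξ η hη hne => disjoint_balls hr₀ hδ hδ' (hsep hξ hη hne)
    _ ≤ hvol n C := lintegral_mono_set (Set.iUnion₂_subset hsub)

end

/-- Corollary `hdimestcor`: the limit set of a convex set of finite hyperbolic volume with
nonempty interior has Hausdorff dimension at most `(n-1)/2`. -/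
theorem hdimestcor (n : ℕ) (hn : 2 ≤ n) (C : Set (EuclideanSpace ℝ (Fin n)))
    (hCconv : Convex ℝ C) (hCsub : C ⊆ ball (0 : EuclideanSpace ℝ (Fin n)) 1)
    (r₀ : ℝ) (hr₀ : r₀ ∈ Set.Ioo (0 : ℝ) 1)
    (hball : closedBall (0 : EuclideanSpace ℝ (Fin n)) r₀ ⊆ C)
    (hfin : hvol n C < ⊤) :
    dimH (closure C ∩ sphere (0 : EuclideanSpace ℝ (Fin n)) 1)
      ≤ ENNReal.ofReal (((n : ℝ) - 1) / 2) := by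
  have hs : 0 ≤ ((n : ℝ) - 1) / 2 := by
    have : (2 : ℝ) ≤ n := by exact_mod_cast hn
    linarith
  have hcompact : IsCompact (closure C ∩ sphere (0 : EuclideanSpace ℝ (Fin n)) 1) :=
    (isCompact_sphere _ _).inter_left isClosed_closure
  set c : ℝ := 4 ^ (-(((n : ℝ) + 1) / 2)) * r₀ ^ n *
    (volume (ball (0 : EuclideanSpace ℝ (Fin n)) 1)).toReal with hc_def
  have hc : 0 < c := by
    have h1 : 0 < (volume (ball (0 : EuclideanSpace ℝ (Fin n)) 1)).toReal :=
      ENNReal.toReal_pos (measure_ball_pos _ _ one_pos).ne' measure_ball_lt_top.ne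
    have h2 := hr₀.1
    positivity
  let δ : ℕ → ℝ := fun k => 1 / ((k : ℝ) + 2)
  have hδ : ∀ k, 0 < δ k := fun k => by positivity
  have hδ' : ∀ k, δ k ≤ 1 / 2 := fun k =>
    one_div_le_one_div_of_le two_pos (by linarith [k.cast_nonneg (α := ℝ)])
  have hδlim : Tendsto δ atTop (𝓝 0) :=
    (tendsto_const_nhds (x := (1 : ℝ))).div_atTop
      (tendsto_atTop_add_const_right _ _ tendsto_natCast_atTop_atTop)
  have hrlim : Tendsto (fun k => ENNReal.ofReal (8 * δ k)) atTop (𝓝 0) := by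
    simpa using ENNReal.tendsto_ofReal (hδlim.const_mul 8)
  choose T hTsub hTsep hTcov using fun k =>
    exists_finset_separated_cover hcompact (ε := 4 * δ k) (mul_pos four_pos (hδ k))
  have hdiam : ∀ k (i : T k), ediam (closedBall (i : EuclideanSpace ℝ (Fin n)) (4 * δ k)) ≤
      ENNReal.ofReal (8 * δ k) := fun k i => by
    refine ediam_le fun x hx y hy => ?_
    rw [edist_dist]
    refine ENNReal.ofReal_le_ofReal ((dist_triangle_right x y i).trans ?_)
    linarith [mem_closedBall.1 hx, mem_closedBall.1 hy]
  have hsum : ∀ k, ∑ i : T k, ediam (closedBall (i : EuclideanSpace ℝ (Fin n)) (4 * δ k)) ^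
      (((n : ℝ) - 1) / 2) ≤ hvol n C * ENNReal.ofReal (8 ^ (((n : ℝ) - 1) / 2) / c) := fun k =>
    calc _ ≤ ∑ _i : T k, ENNReal.ofReal (8 * δ k) ^ (((n : ℝ) - 1) / 2) :=
          Finset.sum_le_sum fun i _ => ENNReal.rpow_le_rpow (hdiam k i) hs
      _ = (T k).card * ENNReal.ofReal (c * δ k ^ (((n : ℝ) - 1) / 2)) *
            ENNReal.ofReal (8 ^ (((n : ℝ) - 1) / 2) / c) := by
          have hpos := hδ k
          rw [Finset.sum_const, Finset.card_univ, Fintype.card_coe, nsmul_eq_mul, mul_assoc,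
            ← ENNReal.ofReal_mul (by positivity),
            ENNReal.ofReal_rpow_of_nonneg (by positivity) hs, Real.mul_rpow (by norm_num) hpos.le]
          congr 2
          field_simp
      _ ≤ _ := by
          gcongr
          exact card_mul_le_hvol hCconv hCsub hr₀ hball (hδ k) (hδ' k) (hTsub k) (hTsep k)
  have hmeas : Measure.hausdorffMeasure (((n : ℝ) - 1) / 2)
      (closure C ∩ sphere (0 : EuclideanSpace ℝ (Fin n)) 1) ≤
        hvol n C * ENNReal.ofReal (8 ^ (((n : ℝ) - 1) / 2) / c) := by
    refine (Measure.hausdorffMeasure_le_liminf_sum (ι := fun k => T k) _ _ _ hrlim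
      (fun k i => closedBall (i : EuclideanSpace ℝ (Fin n)) (4 * δ k))
      (Eventually.of_forall hdiam) (Eventually.of_forall hTcov)).trans ?_
    refine (liminf_le_liminf (Eventually.of_forall hsum)).trans ?_
    rw [liminf_const]
  refine dimH_le_of_hausdorffMeasure_ne_top (d := (((n : ℝ) - 1) / 2).toNNReal) ?_
  rw [Real.coe_toNNReal _ hs]
  exact (hmeas.trans_lt (ENNReal.mul_lt_top hfin ENNReal.ofReal_lt_top)).ne
end

section
/- Let n ≥ 3, let 1 ≤ k be an integer with 2·k ≤ n − 1, and let C be a convex subset of the open unit ball B of EuclideanSpace ℝ n, relatively closed in B, with closedBall(0, r₀) ⊆ C for some r₀ ∈ (0,1) and hvol(C) < ∞. Then there exist a k-dimensional linear subspace Π of EuclideanSpace ℝ n and d ∈ (0,1) such that C ∩ Π ⊆ ball(0, d). -/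
/-!
Let `E` be the set of ideal points of `C`, that is `closure C ∩ sphere 0 1`. By compactness, a
subspace `P` meets `C` in a set of norm bounded away from `1` as soon as `P` misses `E`, so the
task is to find a `k`-dimensional `P` disjoint from `E`; it exists because finite volume forces `E`
to be small.

*Size of `E`.* For `ξ ∈ E` and small `δ`, convexity puts the ball of radius `r₀ δ` around
`(1 - δ) ξ` inside `C` (`ball_subset_of_ideal`). The hyperbolic density there is at least
`(4δ)^(-(n+1)/2)`, so that ball has hyperbolic volume at least a constant times `δ^((n-1)/2)`.
Separated points of `E` give disjoint balls, hence `E` is covered by `O(δ^(-(n-1)/2))` balls of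
radius comparable to `δ` (`card_separated_le`, `exists_separated_cover`). Cutting the cone over `E`
radially into `O(1/δ)` layers shows that its Hausdorff dimension is at most `(n+1)/2`
(`dimH_cone_le`).

*Choice of `P`.* The subspace is built one dimension at a time (`exists_submodule_avoiding`). If a
`j`-dimensional `P` with `j < k` meets the cone only at `0`, the projection of the cone to `Pᗮ` has
dimension at most `(n+1)/2`, which is less than `n - j = dim Pᗮ` since `2k ≤ n - 1`. A nonzero
vector of `Pᗮ` outside that projection can therefore be added to `P`.
-/

open Metric MeasureTheory

/-! ### Separated sets and subspaces avoiding small cones -/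

/-- If the `r`-separated finite subsets of `E` have at most `M` points, then `E` is covered by at
most `M` open balls of radius `r`: a maximal separated set covers. -/
theorem exists_separated_cover {X : Type*} [PseudoMetricSpace X] (E : Set X) (r : ℝ) (hr : 0 < r)
    (M : ℝ) (hM : ∀ t : Finset X, (t : Set X) ⊆ E →
      (t : Set X).Pairwise (fun x y => r ≤ dist x y) → (t.card : ℝ) ≤ M) :
    ∃ t : Finset X, (t.card : ℝ) ≤ M ∧ ∀ x ∈ E, ∃ y ∈ t, dist x y < r := by
  classical
  by_contra! H
  -- A separated set that does not cover can be enlarged, so arbitrarily large ones would exist.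
  have key : ∀ m : ℕ, ∃ t : Finset X, (t : Set X) ⊆ E ∧
      (t : Set X).Pairwise (fun x y => r ≤ dist x y) ∧ t.card = m := by
    intro m
    induction m with
    | zero => exact ⟨∅, by simp, by simp, rfl⟩
    | succ m ih =>
      obtain ⟨t, htE, htp, htc⟩ := ih
      obtain ⟨x, hxE, hx⟩ := H t (hM t htE htp)
      have hxt : x ∉ t := fun h => by have := hx x h; simp at this; linarith
      refine ⟨insert x t, ?_, ?_, ?_⟩
      · rw [Finset.coe_insert]; exact Set.insert_subset hxE htE
      · rw [Finset.coe_insert]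
        refine htp.insert fun y hy _ => ⟨hx y hy, ?_⟩
        rw [dist_comm]; exact hx y hy
      · rw [Finset.card_insert_of_notMem hxt, htc]
  obtain ⟨m, hm⟩ := exists_nat_gt M
  obtain ⟨t, h1, h2, h3⟩ := key m
  have := hM t h1 h2
  rw [h3] at this
  linarith

/-- A cone `K` of Hausdorff dimension less than `n - k + 1` meets some `k`-dimensional subspace at
most in the origin. -/
theorem exists_submodule_avoiding {n : ℕ} (K : Set (EuclideanSpace ℝ (Fin n)))
    (hK : ∀ x ∈ K, ∀ t : ℝ, t • x ∈ K) (k : ℕ) (hkn : k ≤ n)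
    (hdim : dimH K < ((n - k + 1 : ℕ) : ENNReal)) :
    ∃ P : Submodule ℝ (EuclideanSpace ℝ (Fin n)), Module.finrank ℝ P = k ∧
      ∀ x ∈ P, x ∈ K → x = 0 := by
  have key : ∀ j ≤ k, ∃ P : Submodule ℝ (EuclideanSpace ℝ (Fin n)), Module.finrank ℝ P = j ∧
      ∀ x ∈ P, x ∈ K → x = 0 := by
    intro j
    induction j with
    | zero => exact fun _ => ⟨⊥, by simp, fun x hx _ => by simpa using hx⟩
    | succ j ih =>
      intro hj
      obtain ⟨P, hP, hPK⟩ := ih (by omega)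
      have hQ : Module.finrank ℝ Pᗮ = n - j := by
        have := P.finrank_add_finrank_orthogonal
        simp only [finrank_euclideanSpace, Fintype.card_fin] at this
        omega
      -- Adjoining `0` guarantees that the vector found outside the set is nonzero.
      have hS : dimH ({0} ∪ Pᗮ.orthogonalProjectionOnto '' K) < Module.finrank ℝ Pᗮ := by
        rw [dimH_union, dimH_singleton, max_eq_right zero_le, hQ]
        refine (Pᗮ.orthogonalProjectionOnto.lipschitz.dimH_image_le K).trans_lt (hdim.trans_le ?_)
        exact_mod_cast (by omega : n - k + 1 ≤ n - j)
      obtain ⟨v, hv⟩ := (dense_compl_of_dimH_lt_finrank hS).nonempty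
      simp only [Set.mem_compl_iff, Set.mem_union, Set.mem_singleton_iff, not_or] at hv
      obtain ⟨hv0, hvK⟩ := hv
      refine ⟨P ⊔ Submodule.span ℝ {(v : EuclideanSpace ℝ (Fin n))}, ?_, ?_⟩
      · have hd : P ⊓ Submodule.span ℝ {(v : EuclideanSpace ℝ (Fin n))} = ⊥ := by
          rw [eq_bot_iff, ← P.inf_orthogonal_eq_bot]
          refine inf_le_inf_left _ ?_
          rw [Submodule.span_singleton_le_iff_mem]
          exact v.2
        have := Submodule.finrank_sup_add_finrank_inf_eq P
          (Submodule.span ℝ {(v : EuclideanSpace ℝ (Fin n))})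
        rw [hd, finrank_bot, finrank_span_singleton (by simpa using hv0), hP] at this
        omega
      · intro x hx hxK
        obtain ⟨p, hp, w, hw, rfl⟩ := Submodule.mem_sup.1 hx
        obtain ⟨a, rfl⟩ := Submodule.mem_span_singleton.1 hw
        have hproj : Pᗮ.orthogonalProjectionOnto (p + a • (v : EuclideanSpace ℝ (Fin n))) = a • v := by
          rw [map_add, map_smul, Submodule.orthogonalProjectionOnto_mem_subspace_eq_self,
            Submodule.orthogonalProjectionOnto_orthogonal_apply_eq_zero hp, zero_add]
        by_cases ha : a = 0
        · subst ha
          simp only [zero_smul, add_zero] at hxK ⊢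
          exact hPK p hp hxK
        · exact absurd ⟨_, hK _ hxK a⁻¹, by
            rw [map_smul, hproj, smul_smul, inv_mul_cancel₀ ha, one_smul]⟩ hvK
  exact key k le_rfl

/-! ### Volume near ideal points -/

/-- Near an ideal point `ξ`, the set `C` contains the homothetic copy of `ball 0 r₀` with center `ξ`
and ratio `δ`, and this copy lies in the region where `1 - ‖y‖ ^ 2 ≤ 4 * δ`. -/
theorem ball_subset_of_ideal {n : ℕ} (C : Set (EuclideanSpace ℝ (Fin n)))
    (hCconv : Convex ℝ C)
    (hCrelcl : C = closure C ∩ ball (0 : EuclideanSpace ℝ (Fin n)) 1)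
    (r₀ : ℝ) (hr₀ : r₀ ∈ Set.Ioo (0 : ℝ) 1)
    (hball : closedBall (0 : EuclideanSpace ℝ (Fin n)) r₀ ⊆ C)
    (ξ : EuclideanSpace ℝ (Fin n)) (hξ : ξ ∈ closure C) (hξ1 : ‖ξ‖ = 1)
    (δ : ℝ) (hδ : 0 < δ) (hδ2 : δ ≤ 1 / 2) :
    ball ((1 - δ) • ξ) (r₀ * δ) ⊆ C ∩ {y | 1 - ‖y‖ ^ 2 ≤ 4 * δ} := by
  intro y hy
  rw [mem_ball, dist_eq_norm] at hy
  obtain ⟨h0, h1⟩ := hr₀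
  have hn : ‖(1 - δ) • ξ‖ = 1 - δ := by
    rw [norm_smul, hξ1, mul_one, Real.norm_of_nonneg (by linarith)]
  have hlt : ‖y‖ < 1 := by
    have := norm_le_norm_add_norm_sub ((1 - δ) • ξ) y
    rw [hn, norm_sub_rev] at this
    nlinarith
  have hge : 1 - 2 * δ ≤ ‖y‖ := by
    have := norm_le_norm_add_norm_sub y ((1 - δ) • ξ)
    rw [hn] at this
    nlinarith
  refine ⟨?_, ?_⟩
  · rw [hCrelcl]
    refine ⟨?_, by simpa using hlt⟩
    -- `y = (1 - δ) • ξ + δ • z`, where `z` has norm at most `r₀`.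
    have hz : δ⁻¹ • (y - (1 - δ) • ξ) ∈ closure C := by
      apply subset_closure
      apply hball
      rw [mem_closedBall_zero_iff, norm_smul, Real.norm_of_nonneg (by positivity),
        inv_mul_le_iff₀ hδ]
      linarith
    have := hCconv.closure hξ hz (by linarith : 0 ≤ 1 - δ) hδ.le (by ring)
    rwa [smul_smul, mul_inv_cancel₀ hδ.ne', one_smul, add_sub_cancel] at this
  · change 1 - ‖y‖ ^ 2 ≤ 4 * δ
    nlinarith

/-- Bound on the number of separated ideal points: the balls around the points `(1 - δ) • ξ` are
disjoint and each contributes at least `(4 * δ) ^ (-(n + 1) / 2)` times its Lebesgue volume to the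
hyperbolic volume of `C`. The right-hand side is of order `δ ^ (-(n - 1) / 2)`. -/
theorem card_separated_le {n : ℕ} (C : Set (EuclideanSpace ℝ (Fin n)))
    (hCconv : Convex ℝ C)
    (hCrelcl : C = closure C ∩ ball (0 : EuclideanSpace ℝ (Fin n)) 1)
    (r₀ : ℝ) (hr₀ : r₀ ∈ Set.Ioo (0 : ℝ) 1)
    (hball : closedBall (0 : EuclideanSpace ℝ (Fin n)) r₀ ⊆ C)
    (hfin : hvol n C < ⊤)
    (δ : ℝ) (hδ : 0 < δ) (hδ2 : δ ≤ 1 / 2)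
    (t : Finset (EuclideanSpace ℝ (Fin n))) (ht : (t : Set _) ⊆ closure C ∩ sphere 0 1)
    (hsep : (t : Set (EuclideanSpace ℝ (Fin n))).Pairwise (fun x y => 4 * (r₀ * δ) ≤ dist x y)) :
    (t.card : ℝ) ≤ (hvol n C).toReal * (4 * δ) ^ (((n : ℝ) + 1) / 2) /
      ((r₀ * δ) ^ n * (volume (ball (0 : EuclideanSpace ℝ (Fin n)) 1)).toReal) := by
  have hr : 0 < r₀ * δ := mul_pos hr₀.1 hδ
  set s : ℝ := ((n : ℝ) + 1) / 2 with hs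
  have hs0 : 0 ≤ s := by positivity
  set f : EuclideanSpace ℝ (Fin n) → ENNReal :=
    fun x => ENNReal.ofReal ((1 - ‖x‖ ^ 2) ^ (-s)) with hf
  set B : EuclideanSpace ℝ (Fin n) → Set (EuclideanSpace ℝ (Fin n)) :=
    fun ξ => ball ((1 - δ) • ξ) (r₀ * δ) with hB
  have hsub : ∀ ξ ∈ t, B ξ ⊆ C ∩ {y | 1 - ‖y‖ ^ 2 ≤ 4 * δ} := fun ξ hξ =>
    ball_subset_of_ideal C hCconv hCrelcl r₀ hr₀ hball ξ (ht hξ).1 (by simpa using (ht hξ).2)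
      δ hδ hδ2
  have hdisj : (t : Set (EuclideanSpace ℝ (Fin n))).PairwiseDisjoint B := by
    intro x hx y hy hxy
    apply ball_disjoint_ball
    have := hsep hx hy hxy
    -- The factor `1 - δ ≥ 1 / 2` at most halves the separation `4 * (r₀ * δ)`.
    rw [dist_smul₀, Real.norm_of_nonneg (by linarith)]
    nlinarith
  have hone : ∀ ξ ∈ t, ENNReal.ofReal ((4 * δ) ^ (-s)) *
      (ENNReal.ofReal ((r₀ * δ) ^ n) * volume (ball (0 : EuclideanSpace ℝ (Fin n)) 1))
      ≤ ∫⁻ x in B ξ, f x := by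
    intro ξ hξ
    have hv : volume (B ξ) = ENNReal.ofReal ((r₀ * δ) ^ n) *
        volume (ball (0 : EuclideanSpace ℝ (Fin n)) 1) := by
      simp only [hB]
      rw [Measure.addHaar_ball_of_pos _ _ hr, finrank_euclideanSpace, Fintype.card_fin]
    rw [← hv, ← setLIntegral_const]
    refine setLIntegral_mono' measurableSet_ball fun y hy => ?_
    obtain ⟨hyC, hy4⟩ := hsub ξ hξ hy
    have hy1 : ‖y‖ < 1 := by
      rw [hCrelcl] at hyC
      simpa using hyC.2
    refine ENNReal.ofReal_le_ofReal ?_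
    refine Real.rpow_le_rpow_of_nonpos ?_ hy4 (by linarith)
    nlinarith [norm_nonneg y]
  have hsum : (t.card : ENNReal) * (ENNReal.ofReal ((4 * δ) ^ (-s)) *
      (ENNReal.ofReal ((r₀ * δ) ^ n) * volume (ball (0 : EuclideanSpace ℝ (Fin n)) 1)))
      ≤ hvol n C := by
    rw [← nsmul_eq_mul]
    refine (Finset.card_nsmul_le_sum t _ _ hone).trans ?_
    rw [← lintegral_biUnion_finset hdisj (fun _ _ => measurableSet_ball)]
    exact lintegral_mono_set (Set.iUnion₂_subset fun ξ hξ => (hsub ξ hξ).trans Set.inter_subset_left)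
  have hreal := ENNReal.toReal_mono hfin.ne hsum
  have hc : 0 < (volume (ball (0 : EuclideanSpace ℝ (Fin n)) 1)).toReal :=
    ENNReal.toReal_pos (measure_ball_pos _ _ one_pos).ne' measure_ball_lt_top.ne
  rw [ENNReal.toReal_mul, ENNReal.toReal_mul, ENNReal.toReal_mul, ENNReal.toReal_natCast,
    ENNReal.toReal_ofReal (by positivity), ENNReal.toReal_ofReal (by positivity),
    Real.rpow_neg (by positivity)] at hreal
  rw [le_div_iff₀ (by positivity)]
  have hp : 0 < (4 * δ) ^ s := by positivity
  calc _ = (t.card * (((4 * δ) ^ s)⁻¹ * ((r₀ * δ) ^ n *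
        (volume (ball (0 : EuclideanSpace ℝ (Fin n)) 1)).toReal))) * (4 * δ) ^ s := by
        have hi := inv_mul_cancel₀ hp.ne'
        generalize ((4 * δ) ^ s)⁻¹ = q at hi ⊢
        linear_combination (-(t.card * ((r₀ * δ) ^ n *
          (volume (ball (0 : EuclideanSpace ℝ (Fin n)) 1)).toReal))) * hi
    _ ≤ _ := mul_le_mul_of_nonneg_right hreal hp.le

/-! ### Dimension of the cone over the ideal boundary -/

/-- The union of the segments from the center to the ideal points of `C` has Hausdorff dimension at
most `(n + 1) / 2`. It is covered by `O(δ ^ (-(n - 1) / 2) * δ⁻¹)` balls of radius `5 * δ`, which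
even bounds its `(n + 1) / 2`-dimensional Hausdorff measure. -/
theorem dimH_cone_le {n : ℕ} (C : Set (EuclideanSpace ℝ (Fin n)))
    (hCconv : Convex ℝ C)
    (hCrelcl : C = closure C ∩ ball (0 : EuclideanSpace ℝ (Fin n)) 1)
    (r₀ : ℝ) (hr₀ : r₀ ∈ Set.Ioo (0 : ℝ) 1)
    (hball : closedBall (0 : EuclideanSpace ℝ (Fin n)) r₀ ⊆ C)
    (hfin : hvol n C < ⊤) :
    dimH {x | ∃ a ∈ Set.Icc (0 : ℝ) 1, ∃ ξ ∈ closure C ∩ sphere 0 1, x = a • ξ} ≤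
      ENNReal.ofReal (((n : ℝ) + 1) / 2) := by
  set E : Set (EuclideanSpace ℝ (Fin n)) := closure C ∩ sphere 0 1 with hE
  set s : ℝ := ((n : ℝ) + 1) / 2 with hs
  have hs0 : 0 ≤ s := by positivity
  set V := (hvol n C).toReal with hV
  have hV0 : 0 ≤ V := ENNReal.toReal_nonneg
  set c := (volume (ball (0 : EuclideanSpace ℝ (Fin n)) 1)).toReal with hc
  have hc0 : 0 < c :=
    ENNReal.toReal_pos (measure_ball_pos _ _ one_pos).ne' measure_ball_lt_top.ne
  have hr0 : 0 < r₀ := hr₀.1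
  set δ : ℕ → ℝ := fun m => 1 / ((m : ℝ) + 2) with hδ
  have hδ0 : ∀ m, 0 < δ m := fun m => by simp only [hδ]; positivity
  have hδ2 : ∀ m, δ m ≤ 1 / 2 := fun m => by
    simp only [hδ]
    exact one_div_le_one_div_of_le two_pos (by linarith [m.cast_nonneg (α := ℝ)])
  have hcov : ∀ m, ∃ t : Finset (EuclideanSpace ℝ (Fin n)),
      (t.card : ℝ) ≤ V * (4 * δ m) ^ s / ((r₀ * δ m) ^ n * c) ∧
      ∀ x ∈ E, ∃ y ∈ t, dist x y < 4 * (r₀ * δ m) := fun m =>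
    exists_separated_cover E _ (mul_pos four_pos (mul_pos hr0 (hδ0 m))) _ fun t htE htp =>
      card_separated_le C hCconv hCrelcl r₀ hr₀ hball hfin (δ m) (hδ0 m) (hδ2 m) t htE htp
  choose t htcard htcov using hcov
  set K : Set (EuclideanSpace ℝ (Fin n)) :=
    {x | ∃ a ∈ Set.Icc (0 : ℝ) 1, ∃ ξ ∈ E, x = a • ξ} with hK
  -- The radial coordinate `a ∈ [0, 1]` is cut at the multiples of `δ m`; since `1 / δ m = m + 2`, the
  -- indices `0, …, m + 2` suffice.
  set T : ∀ m : ℕ, (t m × Fin (m + 3)) → Set (EuclideanSpace ℝ (Fin n)) :=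
    fun m i => closedBall (((i.2 : ℕ) * δ m) • (i.1 : EuclideanSpace ℝ (Fin n))) (5 * δ m) with hT
  have hdiam : ∀ m i, ediam (T m i) ≤ ENNReal.ofReal (10 * δ m) := by
    intro m i
    refine ediam_le_of_forall_dist_le fun x hx y hy => ?_
    have := dist_triangle_right x y (((i.2 : ℕ) * δ m) • (i.1 : EuclideanSpace ℝ (Fin n)))
    rw [hT, mem_closedBall] at hx hy
    linarith
  have hsub : ∀ m, K ⊆ ⋃ i, T m i := by
    rintro m x ⟨a, ⟨ha0, ha1⟩, η, hη, rfl⟩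
    obtain ⟨ξ, hξ, hηξ⟩ := htcov m η hη
    have hd := hδ0 m
    have hη1 : ‖η‖ = 1 := by simpa using hη.2
    have hfl : (⌊a / δ m⌋₊ : ℝ) * δ m ≤ a :=
      (le_div_iff₀ hd).1 (Nat.floor_le (div_nonneg ha0 hd.le))
    have hfu : a < ((⌊a / δ m⌋₊ : ℝ) + 1) * δ m := (div_lt_iff₀ hd).1 (Nat.lt_floor_add_one _)
    have hj : ⌊a / δ m⌋₊ < m + 3 := by
      have h1 : (⌊a / δ m⌋₊ : ℝ) * δ m ≤ 1 := hfl.trans ha1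
      have h2 : (⌊a / δ m⌋₊ : ℝ) ≤ m + 2 := by
        have : (0 : ℝ) < m + 2 := by positivity
        simpa [hδ, ← div_eq_mul_inv, div_le_iff₀ this] using h1
      have h3 : ⌊a / δ m⌋₊ ≤ m + 2 := by exact_mod_cast h2
      omega
    refine Set.mem_iUnion.2 ⟨(⟨ξ, hξ⟩, ⟨_, hj⟩), ?_⟩
    simp only [hT, mem_closedBall]
    set b := (⌊a / δ m⌋₊ : ℝ) * δ m with hb
    have hb0 : 0 ≤ b := by positivity
    have e : a • η - b • ξ = (a - b) • η + b • (η - ξ) := by module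
    rw [dist_eq_norm] at hηξ ⊢
    rw [e]
    refine (norm_add_le _ _).trans ?_
    rw [norm_smul, norm_smul, hη1, Real.norm_of_nonneg (by linarith : 0 ≤ a - b),
      Real.norm_of_nonneg hb0]
    have h1 : b * ‖η - ξ‖ ≤ 1 * (4 * (r₀ * δ m)) :=
      mul_le_mul (by linarith) hηξ.le (norm_nonneg _) zero_le_one
    have h2 : r₀ * δ m ≤ δ m := by nlinarith [hr₀.2]
    nlinarith
  have hlim : Filter.Tendsto (fun m => ENNReal.ofReal (10 * δ m)) Filter.atTop (nhds 0) := by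
    have h1 : Filter.Tendsto δ Filter.atTop (nhds 0) := by
      have := (Filter.tendsto_add_atTop_iff_nat 1).2
        (tendsto_one_div_add_atTop_nhds_zero_nat (𝕜 := ℝ))
      refine this.congr fun m => ?_
      simp only [hδ]; push_cast; ring_nf
    simpa using ENNReal.tendsto_ofReal (h1.const_mul 10)
  have hbound : ∀ m, ∑ i, ediam (T m i) ^ s ≤
      ENNReal.ofReal (2 * V * 40 ^ s / (r₀ ^ n * c)) := by
    intro m
    have hd := hδ0 m
    calc ∑ i, ediam (T m i) ^ s ≤ ∑ _i : t m × Fin (m + 3), ENNReal.ofReal (10 * δ m) ^ s :=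
          Finset.sum_le_sum fun i _ => ENNReal.rpow_le_rpow (hdiam m i) hs0
      _ = ENNReal.ofReal (((t m).card * (m + 3)) * (10 * δ m) ^ s) := by
          rw [Finset.sum_const, ENNReal.ofReal_rpow_of_nonneg (by positivity) hs0,
            ← ENNReal.ofReal_nsmul]
          simp
      _ ≤ _ := ENNReal.ofReal_le_ofReal ?_
    have h1 : (m : ℝ) + 3 ≤ 2 / δ m := by
      simp only [hδ]; rw [div_div_eq_mul_div]; linarith [m.cast_nonneg (α := ℝ)]
    -- As `2 * s = n + 1`, all powers of `δ m` cancel.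
    have h2 : δ m ^ s * δ m ^ s = δ m ^ n * δ m := by
      rw [← Real.rpow_add hd, ← pow_succ, ← Real.rpow_natCast]
      congr 1; simp only [hs]; push_cast; ring
    have h3 : (40 : ℝ) ^ s = 4 ^ s * 10 ^ s := by
      rw [← Real.mul_rpow (by norm_num) (by norm_num)]; norm_num
    calc ((t m).card * (m + 3)) * (10 * δ m) ^ s
        ≤ ((V * (4 * δ m) ^ s / ((r₀ * δ m) ^ n * c)) * (2 / δ m)) * (10 * δ m) ^ s := by
          gcongr
          exact htcard m
      _ = 2 * V * 40 ^ s / (r₀ ^ n * c) * ((δ m ^ s * δ m ^ s) / (δ m ^ n * δ m)) := by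
          rw [h3, Real.mul_rpow (by norm_num) hd.le, Real.mul_rpow (by norm_num) hd.le, mul_pow]
          field_simp
      _ = _ := by rw [h2, div_self (by positivity), mul_one]
  have hmeas : Measure.hausdorffMeasure s K ≤ ENNReal.ofReal (2 * V * 40 ^ s / (r₀ ^ n * c)) := by
    refine (Measure.hausdorffMeasure_le_liminf_sum s K _ hlim T
      (Filter.Eventually.of_forall hdiam) (Filter.Eventually.of_forall hsub)).trans ?_
    refine (Filter.liminf_le_liminf (Filter.Eventually.of_forall hbound)).trans ?_
    simp
  have := dimH_le_of_hausdorffMeasure_ne_top (s := K) (d := s.toNNReal) (by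
    rw [Real.coe_toNNReal _ hs0]
    exact (hmeas.trans_lt ENNReal.ofReal_lt_top).ne)
  exact this

/-! ### Bounded sections -/

/-- Qualitative form of Theorem `hypradversion`: a convex set of finite hyperbolic volume
containing a ball about the center admits, for every `k` with `2k ≤ n-1`, a bounded
`k`-dimensional section through the center. -/
theorem hypradversion_qualitative (n k : ℕ) (hn : 3 ≤ n) (hk : 1 ≤ k) (hkn : 2 * k ≤ n - 1)
    (C : Set (EuclideanSpace ℝ (Fin n)))
    (hCconv : Convex ℝ C) (hCsub : C ⊆ ball (0 : EuclideanSpace ℝ (Fin n)) 1)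
    (hCrelcl : C = closure C ∩ ball (0 : EuclideanSpace ℝ (Fin n)) 1)
    (r₀ : ℝ) (hr₀ : r₀ ∈ Set.Ioo (0 : ℝ) 1)
    (hball : closedBall (0 : EuclideanSpace ℝ (Fin n)) r₀ ⊆ C)
    (hfin : hvol n C < ⊤) :
    ∃ (P : Submodule ℝ (EuclideanSpace ℝ (Fin n))) (d : ℝ),
      Module.finrank ℝ P = k ∧ d ∈ Set.Ioo (0 : ℝ) 1 ∧
        C ∩ (P : Set (EuclideanSpace ℝ (Fin n))) ⊆ ball (0 : EuclideanSpace ℝ (Fin n)) d := by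
  set K₁ : Set (EuclideanSpace ℝ (Fin n)) :=
    {x | ∃ a ∈ Set.Icc (0 : ℝ) 1, ∃ ξ ∈ closure C ∩ sphere 0 1, x = a • ξ} with hK₁
  have hdim₁ := dimH_cone_le C hCconv hCrelcl r₀ hr₀ hball hfin
  rw [← hK₁] at hdim₁
  set K : Set (EuclideanSpace ℝ (Fin n)) :=
    {x | ∃ a : ℝ, ∃ ξ ∈ closure C ∩ sphere 0 1, x = a • ξ} with hK
  -- Countably many dilates of the truncated cone `K₁` exhaust the full cone `K`.
  have hKsub : K ⊆ ⋃ N : ℤ, (fun x => (N : ℝ) • x) '' K₁ := by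
    rintro x ⟨a, ξ, hξ, rfl⟩
    -- `a = N * (a / N)` with `N` an integer of the sign of `a` and `|a| ≤ |N|`.
    obtain ⟨N, hN0, hN1⟩ : ∃ N : ℤ, (N : ℝ) ≠ 0 ∧ a / N ∈ Set.Icc (0 : ℝ) 1 := by
      rcases le_or_gt 0 a with ha | ha
      · have h := Nat.lt_floor_add_one a
        refine ⟨⌊a⌋₊ + 1, ?_, ?_, ?_⟩
        · push_cast; positivity
        · push_cast; positivity
        · push_cast; exact (div_le_one (by positivity)).2 h.le
      · have h := Nat.lt_floor_add_one (-a)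
        have hp : (0 : ℝ) < ⌊-a⌋₊ + 1 := by positivity
        have e : a / ((-(⌊-a⌋₊ + 1 : ℤ) : ℤ) : ℝ) = (-a) / (⌊-a⌋₊ + 1) := by
          push_cast; rw [div_neg, neg_div]
        refine ⟨-(⌊-a⌋₊ + 1), ?_, ?_, ?_⟩
        · push_cast; linarith
        · rw [e]; exact div_nonneg (by linarith) hp.le
        · rw [e]; exact (div_le_one hp).2 h.le
    refine Set.mem_iUnion.2 ⟨N, _, ⟨a / N, hN1, ξ, hξ, rfl⟩, ?_⟩
    simp only [smul_smul]
    rw [mul_div_cancel₀ _ hN0]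
  have hdim : dimH K < ((n - k + 1 : ℕ) : ENNReal) := by
    calc dimH K ≤ dimH (⋃ N : ℤ, (fun x => (N : ℝ) • x) '' K₁) := dimH_mono hKsub
      _ ≤ dimH K₁ := by
        rw [dimH_iUnion]
        exact iSup_le fun N => (lipschitzWith_smul (N : ℝ)).dimH_image_le K₁
      _ ≤ ENNReal.ofReal (((n : ℝ) + 1) / 2) := hdim₁
      _ < ENNReal.ofReal ((n - k + 1 : ℕ) : ℝ) := by
        have h : n + 1 < 2 * (n - k + 1) := by omega
        have h' : (n : ℝ) + 1 < 2 * ((n - k + 1 : ℕ) : ℝ) := by exact_mod_cast h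
        rw [ENNReal.ofReal_lt_ofReal_iff (by positivity)]
        linarith
      _ = _ := ENNReal.ofReal_natCast _
  obtain ⟨P, hP, hPK⟩ := exists_submodule_avoiding K
    (by rintro _ ⟨a, ξ, hξ, rfl⟩ t; exact ⟨t * a, ξ, hξ, smul_smul _ _ _⟩) k (by omega) hdim
  refine ⟨P, ?_⟩
  have hcl : closure C ⊆ closedBall 0 1 :=
    closure_minimal (hCsub.trans ball_subset_closedBall) isClosed_closedBall
  have hcomp : IsCompact (closure C ∩ (P : Set (EuclideanSpace ℝ (Fin n)))) :=
    ((isCompact_closedBall 0 1).of_isClosed_subset isClosed_closure hcl).inter_right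
      P.closed_of_finiteDimensional
  have h0 : (0 : EuclideanSpace ℝ (Fin n)) ∈ closure C :=
    subset_closure (hball (mem_closedBall_self hr₀.1.le))
  obtain ⟨z, ⟨hzC, hzP⟩, hzmax⟩ :=
    hcomp.exists_isMaxOn ⟨0, h0, P.zero_mem⟩ continuous_norm.continuousOn
  have hz1 : ‖z‖ < 1 := by
    refine lt_of_le_of_ne (by simpa using hcl hzC) fun h => ?_
    have hz0 := hPK z hzP ⟨1, z, ⟨hzC, by simpa using h⟩, (one_smul _ _).symm⟩
    simp [hz0] at h
  refine ⟨(‖z‖ + 1) / 2, hP, ⟨by positivity, by linarith⟩, ?_⟩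
  rintro x ⟨hxC, hxP⟩
  have hx : ‖x‖ ≤ ‖z‖ := hzmax ⟨subset_closure hxC, hxP⟩
  rw [mem_ball_zero_iff]
  linarith
end

section
/- Let n ≥ 2 and 2 ≤ k ≤ n be integers, let C be a convex subset of the open unit ball B of EuclideanSpace ℝ n, relatively closed in B, with closedBall(0, r₀) ⊆ C, and let 0 < r₀ < d₁ < d < 1. Set α = α_{r₀}(d, d₁). If hvol(C) < ω_n · (∫₀^(artanh d₁) (sinh t)^(n−1) dt) · (∫₀^α (sin t)^(k−2) dt) / (∫₀^π (sin t)^(k−2) dt), then there exists a k-dimensional linear subspace Π of EuclideanSpace ℝ n with C ∩ Π ⊆ ball(0, d). -/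
/-!
Suppose every `k`-plane through the center meets `C` in a point of norm at least `d`, and let
`A = {x | (d₁ / ‖x‖) • x ∈ C}` be the cone over the part of the sphere of radius `d₁` lying in `C`.

* Geometry inside one plane. Let `x ∈ C` with `‖x‖ ≥ d`. By convexity `C` contains the convex hull
  of `(d / ‖x‖) • x` and the ball of radius `r₀`, and this hull contains every point of norm `d₁`
  whose angle with `x` is at most `α = alphaAngle r₀ d d₁` (`smul_mem_of_cap`). So inside every
  `k`-plane the cone `A` contains a circular cone of angular radius `α`, which fills the fraction
  `∫₀^α sin^(k-2) / ∫₀^π sin^(k-2)` of the unit ball of that plane (`volume_cap`).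
* Averaging. Take the Haar probability measure on the orthogonal group. For `x ≠ 0` the probability
  that a random rotation puts `x` into `A` does not depend on `x`; call it `c`. Fubini on the unit
  ball of a fixed `k`-plane shows that `c` is at least the fraction above, and Fubini on the whole
  space shows that `A` carries exactly the share `c` of every radial measure (`averaging`).
* Hyperbolic volume. The points of `A` of norm less than `d₁` lie in `C`, so `hvol C` is at least
  `c` times the hyperbolic volume of the ball of Euclidean radius `d₁` (`hvol_lower_bound`), and the
  latter is `ω_n ∫₀^(artanh d₁) sinh^(n-1)` (`lintegral_hyp_ball`, by the substitution
  `r = tanh t`). This contradicts the assumed upper bound on `hvol C`.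
-/

open Metric MeasureTheory

/-- `κ_m`: the volume of the unit ball in `ℝ^m`. -/
noncomputable def kappa (m : ℕ) : ℝ := Real.pi ^ ((m : ℝ) / 2) / Real.Gamma ((m : ℝ) / 2 + 1)

/-- `ω_m = m·κ_m`: the surface area of the unit sphere `S^{m-1}`. -/
noncomputable def omegaSph (m : ℕ) : ℝ := m * kappa m

/-! ### Polar coordinates and spherical caps -/

/-- Integration of a radial function in polar coordinates: the factor in front is the area of
the unit sphere, expressed as the dimension times the volume of the unit ball. The version for
`ℝ≥0∞`-valued functions needs no integrability. -/
theorem lintegral_radial {E : Type*} [NormedAddCommGroup E] [NormedSpace ℝ E]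
    [MeasurableSpace E] [Nontrivial E] (μ : Measure E) [FiniteDimensional ℝ E] [BorelSpace E]
    [μ.IsAddHaarMeasure] (f : ℝ → ENNReal) (hf : Measurable f) :
    ∫⁻ x, f ‖x‖ ∂μ = (Module.finrank ℝ E * μ (ball 0 1)) *
      ∫⁻ r in Set.Ioi (0 : ℝ), ENNReal.ofReal (r ^ (Module.finrank ℝ E - 1)) * f r := by
  have h1 := μ.measurePreserving_homeomorphUnitSphereProd.lintegral_comp_emb
    (Homeomorph.measurableEmbedding _) (fun p => f p.2)
  have h2 : ∫⁻ x, f ‖x‖ ∂μ = ∫⁻ x : ({(0)}ᶜ : Set E), f ‖x.1‖ ∂(μ.comap (↑)) := by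
    rw [lintegral_subtype_comap (measurableSet_singleton _).compl (fun x ↦ f (‖x‖)),
      restrict_compl_singleton]
  rw [h2]
  refine Eq.trans (by simp) (h1.trans ?_)
  rw [lintegral_prod _ (by fun_prop)]
  simp only [lintegral_const, Measure.toSphere_apply_univ]
  rw [mul_comm, Measure.volumeIoiPow, lintegral_withDensity_eq_lintegral_mul _ (by fun_prop) (by fun_prop)]
  congr 1
  exact lintegral_subtype_comap measurableSet_Ioi
    (fun r : ℝ => ENNReal.ofReal (r ^ (Module.finrank ℝ E - 1)) * f r)

open Real in
/-- Polar coordinates in the half plane `p.2 > 0`: the sector of angle `α` around the first axis,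
cut at radius `1` and weighted by `p.2 ^ m`. The weight is what remains of the directions orthogonal
to the axis of a cap in dimension `m + 2`. -/
theorem lintegral_sector (m : ℕ) (α : ℝ) (h0 : 0 ≤ α) (hπ : α ≤ π) :
    ∫⁻ p : ℝ × ℝ, {p : ℝ × ℝ | 0 < p.2 ∧ √(p.1 ^ 2 + p.2 ^ 2) < 1 ∧
        cos α * √(p.1 ^ 2 + p.2 ^ 2) ≤ p.1}.indicator (fun p => ENNReal.ofReal (p.2 ^ m)) p =
      (∫⁻ r in Set.Ioi (0 : ℝ), (Set.Iio 1).indicator (fun r => ENNReal.ofReal (r ^ (m + 1))) r) *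
        ENNReal.ofReal (∫ θ in (0 : ℝ)..α, sin θ ^ m) := by
  have hsin : ENNReal.ofReal (∫ θ in (0 : ℝ)..α, sin θ ^ m) =
      ∫⁻ θ in Set.Ioo (-π) π, (Set.Ioc 0 α).indicator (fun θ => ENNReal.ofReal (sin θ ^ m)) θ := by
    rw [intervalIntegral.integral_of_le h0, ofReal_integral_eq_lintegral_ofReal,
      lintegral_indicator measurableSet_Ioc, Measure.restrict_restrict measurableSet_Ioc]
    · refine setLIntegral_congr ?_
      have : Set.Ioc 0 α ∩ Set.Ioo (-π) π = Set.Ioc 0 α \ {π} := by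
        ext θ
        simp only [Set.mem_inter_iff, Set.mem_Ioc, Set.mem_Ioo, Set.mem_sdiff, Set.mem_singleton_iff]
        constructor
        · rintro ⟨h1, h2⟩
          exact ⟨h1, h2.2.ne⟩
        · rintro ⟨h1, h2⟩
          exact ⟨h1, by linarith [pi_pos], lt_of_le_of_ne (h1.2.trans hπ) h2⟩
      rw [this]
      exact (sdiff_null_ae_eq_self (by simp)).symm
    · have : Continuous fun θ : ℝ => sin θ ^ m := by fun_prop
      exact this.integrableOn_Ioc
    · filter_upwards [ae_restrict_mem measurableSet_Ioc] with θ hθ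
      exact pow_nonneg (sin_nonneg_of_nonneg_of_le_pi hθ.1.le (hθ.2.trans hπ)) m
  -- one factor `r` is the Jacobian; the other `r ^ m` comes from `p.2 ^ m = (r * sin θ) ^ m`
  rw [hsin, ← lintegral_comp_polarCoord_symm, polarCoord_target, Measure.volume_eq_prod,
    ← Measure.prod_restrict, ← lintegral_prod_mul]
  · rw [Measure.prod_restrict]
    refine setLIntegral_congr_fun (measurableSet_Ioi.prod measurableSet_Ioo) ?_
    rintro ⟨r, θ⟩ ⟨hr, hθ⟩
    simp only [Set.mem_Ioi, Set.mem_Ioo] at hr hθ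
    have hsq : √((r * cos θ) ^ 2 + (r * sin θ) ^ 2) = r := by
      rw [show (r * cos θ) ^ 2 + (r * sin θ) ^ 2 = r ^ 2 * (sin θ ^ 2 + cos θ ^ 2) by ring,
        sin_sq_add_cos_sq, mul_one, sqrt_sq hr.le]
    simp only [polarCoord_symm_apply, smul_eq_mul]
    have hiff : (0 < sin θ ∧ cos α ≤ cos θ) ↔ (0 < θ ∧ θ ≤ α) := by
      rcases le_or_gt θ 0 with h | h
      · have := sin_nonpos_of_nonpos_of_neg_pi_le h hθ.1.le
        constructor <;> intro h' <;> linarith [h'.1]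
      · have := sin_pos_of_pos_of_lt_pi h hθ.2
        simp only [this, h, true_and]
        exact strictAntiOn_cos.le_iff_ge ⟨h0, hπ⟩ ⟨h.le, hθ.2.le⟩
    have hmem : (r * cos θ, r * sin θ) ∈ {p : ℝ × ℝ | 0 < p.2 ∧ √(p.1 ^ 2 + p.2 ^ 2) < 1 ∧
        cos α * √(p.1 ^ 2 + p.2 ^ 2) ≤ p.1} ↔ r ∈ Set.Iio (1 : ℝ) ∧ θ ∈ Set.Ioc 0 α := by
      simp only [Set.mem_ofPred_eq, hsq, Set.mem_Iio, Set.mem_Ioc, ← hiff, mul_comm (cos α),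
        mul_le_mul_iff_right₀ hr, mul_pos_iff_of_pos_left hr]
      tauto
    by_cases h1 : r ∈ Set.Iio (1 : ℝ)
    · by_cases h2 : θ ∈ Set.Ioc 0 α
      · rw [Set.indicator_of_mem (hmem.2 ⟨h1, h2⟩), Set.indicator_of_mem h1,
          Set.indicator_of_mem h2, ← ENNReal.ofReal_mul hr.le, ← ENNReal.ofReal_mul (by positivity)]
        congr 1
        ring
      · rw [Set.indicator_of_notMem (fun h => h2 (hmem.1 h).2), Set.indicator_of_notMem h2]
        simp
    · rw [Set.indicator_of_notMem (fun h => h1 (hmem.1 h).1), Set.indicator_of_notMem h1]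
      simp
  · exact ((by fun_prop : Measurable fun r : ℝ => ENNReal.ofReal (r ^ (m + 1))).indicator
      measurableSet_Iio).aemeasurable
  · exact ((by fun_prop : Measurable fun r : ℝ => ENNReal.ofReal (sin r ^ m)).indicator
      measurableSet_Ioc).aemeasurable

/-- A model of `ℝ^(m+2)` adapted to rotations about an axis: the Euclidean (`L²`) product of the
axis `ℝ` and its orthogonal complement `ℝ^(m+1)`. -/
abbrev Cyl (m : ℕ) : Type := WithLp 2 (ℝ × EuclideanSpace ℝ (Fin (m + 1)))

open Real in
/-- The circular cone of angular radius `α` about the first axis, cut at radius `1`, has volume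
proportional to `∫₀^α sin^m`. The constant is left implicit: only ratios of two such volumes are
needed, and `α = π` gives the whole ball. -/
theorem exists_cap_const (m : ℕ) : ∃ K : ENNReal, ∀ α : ℝ, 0 ≤ α → α ≤ π →
    volume {y : Cyl m | ‖y‖ < 1 ∧ cos α * ‖y‖ ≤ y.fst} =
      K * ENNReal.ofReal (∫ θ in (0 : ℝ)..α, sin θ ^ m) := by
  refine ⟨(Module.finrank ℝ (EuclideanSpace ℝ (Fin (m + 1))) *
    volume (ball (0 : EuclideanSpace ℝ (Fin (m + 1))) 1)) *
    ∫⁻ r in Set.Ioi (0 : ℝ), (Set.Iio 1).indicator (fun r => ENNReal.ofReal (r ^ (m + 1))) r,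
    fun α h0 hπ => ?_⟩
  let S : Set (ℝ × ℝ) := {p : ℝ × ℝ | √(p.1 ^ 2 + p.2 ^ 2) < 1 ∧
        cos α * √(p.1 ^ 2 + p.2 ^ 2) ≤ p.1}
  have hS : MeasurableSet S := by
    have h1 : MeasurableSet {p : ℝ × ℝ | √(p.1 ^ 2 + p.2 ^ 2) < 1} :=
      measurableSet_lt (by fun_prop) (by fun_prop)
    have h2 : MeasurableSet {p : ℝ × ℝ | cos α * √(p.1 ^ 2 + p.2 ^ 2) ≤ p.1} :=
      measurableSet_le (by fun_prop) (by fun_prop)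
    exact h1.inter h2
  let T : Set (ℝ × EuclideanSpace ℝ (Fin (m + 1))) := {q | (q.1, ‖q.2‖) ∈ S}
  have hT : MeasurableSet T := by
    have : Measurable fun q : ℝ × EuclideanSpace ℝ (Fin (m + 1)) => (q.1, ‖q.2‖) := by fun_prop
    exact this hS
  have e1 : {y : Cyl m | ‖y‖ < 1 ∧ cos α * ‖y‖ ≤ y.fst} = WithLp.ofLp ⁻¹' T := by
    ext y
    simp [T, S, WithLp.prod_norm_eq_of_L2]
  rw [e1, (WithLp.volume_preserving_ofLp ℝ (EuclideanSpace ℝ (Fin (m + 1)))).measure_preimage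
    hT.nullMeasurableSet, ← lintegral_indicator_one hT, Measure.volume_eq_prod,
    lintegral_prod _ (measurable_one.indicator hT).aemeasurable]
  -- the slice at height `t` on the axis is radial in the orthogonal variable
  have e2 : ∀ t : ℝ, ∫⁻ z : EuclideanSpace ℝ (Fin (m + 1)), T.indicator 1 (t, z) =
      (Module.finrank ℝ (EuclideanSpace ℝ (Fin (m + 1))) *
        volume (ball (0 : EuclideanSpace ℝ (Fin (m + 1))) 1)) *
      ∫⁻ s : ℝ, {p : ℝ × ℝ | 0 < p.2 ∧ √(p.1 ^ 2 + p.2 ^ 2) < 1 ∧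
        cos α * √(p.1 ^ 2 + p.2 ^ 2) ≤ p.1}.indicator
          (fun p => ENNReal.ofReal (p.2 ^ m)) (t, s) := by
    intro t
    have := lintegral_radial (volume : Measure (EuclideanSpace ℝ (Fin (m + 1))))
      (fun s => S.indicator 1 (t, s)) ((measurable_one.indicator hS).comp measurable_prodMk_left)
    refine Eq.trans this ?_
    congr 1
    rw [← lintegral_indicator measurableSet_Ioi]
    congr 1
    ext s
    by_cases h1 : 0 < s
    · by_cases h2 : (t, s) ∈ S
      · rw [Set.indicator_of_mem (show s ∈ Set.Ioi 0 from h1), Set.indicator_of_mem h2,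
          Set.indicator_of_mem (by exact ⟨h1, h2⟩)]
        simp
      · rw [Set.indicator_of_mem (show s ∈ Set.Ioi 0 from h1), Set.indicator_of_notMem h2,
          Set.indicator_of_notMem (fun h => h2 h.2), mul_zero]
    · rw [Set.indicator_of_notMem (show s ∉ Set.Ioi 0 from h1),
        Set.indicator_of_notMem (fun h => h1 h.1)]
  have hm : Measurable ({p : ℝ × ℝ | 0 < p.2 ∧ √(p.1 ^ 2 + p.2 ^ 2) < 1 ∧
        cos α * √(p.1 ^ 2 + p.2 ^ 2) ≤ p.1}.indicator
          (fun p => ENNReal.ofReal (p.2 ^ m))) :=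
    Measurable.indicator (by fun_prop)
      ((measurableSet_lt measurable_const measurable_snd).inter hS)
  simp only [e2]
  rw [lintegral_const_mul _ hm.lintegral_prod_right', ← lintegral_prod _ hm.aemeasurable,
    ← Measure.volume_eq_prod, lintegral_sector m α h0 hπ]
  simp only [mul_assoc]

open Real in
/-- The circular cone of angular radius `α` about any unit vector `e` fills the fraction
`∫₀^α sin^m / ∫₀^π sin^m` of the unit ball of an `(m+2)`-dimensional space. -/
theorem volume_cap (m : ℕ) (e : Cyl m) (he : ‖e‖ = 1) (α : ℝ) (h0 : 0 ≤ α) (hπ : α ≤ π) :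
    volume {y : Cyl m | ‖y‖ < 1 ∧ cos α * ‖y‖ ≤ inner ℝ e y} *
        ENNReal.ofReal (∫ θ in (0 : ℝ)..π, sin θ ^ m) =
      volume (ball (0 : Cyl m) 1) * ENNReal.ofReal (∫ θ in (0 : ℝ)..α, sin θ ^ m) := by
  obtain ⟨K, hK⟩ := exists_cap_const m
  let e₀ : Cyl m := WithLp.toLp 2 (1, 0)
  have he₀ : ‖e₀‖ = 1 := by simp [e₀]
  have hin : ∀ y : Cyl m, inner ℝ e₀ y = y.fst := by
    intro y
    simp [e₀, WithLp.prod_inner_apply]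
  have hball : ball (0 : Cyl m) 1 = {y : Cyl m | ‖y‖ < 1 ∧ cos π * ‖y‖ ≤ y.fst} := by
    ext y
    rw [mem_ball_zero_iff]
    refine ⟨fun h => ⟨h, ?_⟩, fun h => h.1⟩
    have := abs_real_inner_le_norm e₀ y
    rw [he₀, hin, one_mul] at this
    simpa using (abs_le.1 this).1
  have hcap : volume {y : Cyl m | ‖y‖ < 1 ∧ cos α * ‖y‖ ≤ inner ℝ e y} =
      volume {y : Cyl m | ‖y‖ < 1 ∧ cos α * ‖y‖ ≤ y.fst} := by
    -- a reflection carrying `e` to the first axis preserves volume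
    let R := (ℝ ∙ (e - e₀))ᗮ.reflection
    have hR : R e = e₀ := Submodule.reflection_sub (he.trans he₀.symm)
    have hset : MeasurableSet {y : Cyl m | ‖y‖ < 1 ∧ cos α * ‖y‖ ≤ inner ℝ e₀ y} := by
      have h1 : MeasurableSet {y : Cyl m | ‖y‖ < 1} :=
        measurableSet_lt (by fun_prop) (by fun_prop)
      have h2 : MeasurableSet {y : Cyl m | cos α * ‖y‖ ≤ inner ℝ e₀ y} :=
        measurableSet_le (by fun_prop) (by fun_prop)
      exact h1.inter h2
    have := R.measurePreserving.measure_preimage hset.nullMeasurableSet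
    simp only [hin] at this
    rw [← this]
    congr 1
    ext y
    simp only [Set.mem_preimage, Set.mem_ofPred_eq, ← hin, ← hR, R.inner_map_map, R.norm_map]
  rw [hcap, hK α h0 hπ, hball, hK π pi_pos.le le_rfl]
  ring

/-! ### Averaging over the orthogonal group -/

/-- A cone `A` of which every rotated copy meets the unit ball of the subspace `ι F` in volume at
least `a` has a share `c` of every radial measure, with `c ≥ a / vol (ball 0 1)`. The averaging is
over an invariant probability measure on a group `G` acting through all linear isometries; `G` is
abstract because the type of linear isometries itself carries no topology. -/
theorem averaging_of_group {G E F : Type*} [Group G] [TopologicalSpace G] [IsTopologicalGroup G]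
    [SecondCountableTopology G] [MeasurableSpace G] [BorelSpace G]
    (μ : Measure G) [IsProbabilityMeasure μ] [μ.IsMulLeftInvariant]
    [NormedAddCommGroup E] [InnerProductSpace ℝ E]
    [FiniteDimensional ℝ E] [MeasurableSpace E] [BorelSpace E] [Nontrivial E]
    [NormedAddCommGroup F] [InnerProductSpace ℝ F]
    [FiniteDimensional ℝ F] [MeasurableSpace F] [BorelSpace F] [Nontrivial F]
    (ρ : G →* (E ≃ₗᵢ[ℝ] E)) (hsurj : Function.Surjective ρ)
    (hρ : Continuous fun p : G × E => ρ p.1 p.2)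
    (ι : F →ₗᵢ[ℝ] E) (A : Set E) (hA : MeasurableSet A)
    (hcone : ∀ x ∈ A, ∀ t : ℝ, 0 < t → t • x ∈ A) (a : ENNReal)
    (ha : ∀ g : E ≃ₗᵢ[ℝ] E, a ≤ volume {y : F | y ∈ ball (0 : F) 1 ∧ g (ι y) ∈ A}) :
    ∃ c : ENNReal, a ≤ c * volume (ball (0 : F) 1) ∧
      ∀ w : ℝ → ENNReal, Measurable w →
        ∫⁻ x in A, w ‖x‖ = c * ∫⁻ x : E, w ‖x‖ := by
  have hcont : Continuous fun p : G × E => ρ p.1⁻¹ p.2 :=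
    hρ.comp ((continuous_inv.comp continuous_fst).prodMk continuous_snd)
  have hmeas : MeasurableSet {p : G × E | ρ p.1⁻¹ p.2 ∈ A} :=
    hcont.measurable hA
  -- the probability that a random rotation moves `x` into `A`
  let h : E → ENNReal := fun x => μ {g : G | ρ g⁻¹ x ∈ A}
  have hinv : ∀ (γ : G) (x : E), h (ρ γ x) = h x := by
    intro γ x
    have := measure_preimage_mul μ γ⁻¹ {g : G | ρ g⁻¹ x ∈ A}
    refine Eq.trans ?_ this
    simp [h, Set.preimage]
    rfl
  -- a reflection exchanges any two vectors of equal norm, so invariance makes `h` radial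
  have hnorm : ∀ x y : E, ‖x‖ = ‖y‖ → h x = h y := by
    intro x y hxy
    obtain ⟨γ, hγ⟩ := hsurj (ℝ ∙ (x - y))ᗮ.reflection
    have h1 := hinv γ x
    rw [hγ, Submodule.reflection_sub hxy] at h1
    exact h1.symm
  have hscale : ∀ (x : E) (t : ℝ), 0 < t → h (t • x) = h x := by
    intro x t ht
    simp only [h]
    congr 1
    ext g
    simp only [Set.mem_ofPred_eq, map_smul]
    refine ⟨fun hg => ?_, fun hg => hcone _ hg t ht⟩
    simpa [smul_smul, ht.ne'] using hcone _ hg t⁻¹ (by positivity)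
  obtain ⟨x₀, hx₀⟩ := exists_ne (0 : E)
  have hconst : ∀ x : E, x ≠ 0 → h x = h x₀ := by
    intro x hx
    have h1 : 0 < ‖x‖ := norm_pos_iff.mpr hx
    have h2 : 0 < ‖x₀‖ := norm_pos_iff.mpr hx₀
    rw [← hscale x (‖x₀‖ / ‖x‖) (by positivity)]
    apply hnorm
    rw [norm_smul, Real.norm_eq_abs, abs_of_pos (by positivity)]
    field_simp
  refine ⟨h x₀, ?_, ?_⟩
  · have hm2 : MeasurableSet {p : G × F | ρ p.1⁻¹ (ι p.2) ∈ A} := by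
      have : Continuous fun p : G × F => ρ p.1⁻¹ (ι p.2) :=
        hcont.comp (continuous_fst.prodMk (ι.continuous.comp continuous_snd))
      exact this.measurable hA
    have e1 : ∀ g : G, a ≤ ∫⁻ y in ball (0 : F) 1,
        {p : G × F | ρ p.1⁻¹ (ι p.2) ∈ A}.indicator 1 (g, y) := by
      intro g
      refine (ha (ρ g⁻¹)).trans ?_
      have hm3 : MeasurableSet {y : F | ρ g⁻¹ (ι y) ∈ A} :=
        measurable_prodMk_left hm2
      have : ∀ y : F, {p : G × F | ρ p.1⁻¹ (ι p.2) ∈ A}.indicator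
          (1 : G × F → ENNReal) (g, y) =
          {y : F | ρ g⁻¹ (ι y) ∈ A}.indicator 1 y := fun y => rfl
      simp only [this]
      rw [lintegral_indicator_one hm3, Measure.restrict_apply hm3]
      exact measure_mono fun y hy => ⟨hy.2, hy.1⟩
    calc a = ∫⁻ g : G, a ∂μ := by simp
      _ ≤ ∫⁻ g : G, ∫⁻ y in ball (0 : F) 1,
        {p : G × F | ρ p.1⁻¹ (ι p.2) ∈ A}.indicator 1 (g, y) ∂volume ∂μ :=
          lintegral_mono e1
      _ = ∫⁻ y in ball (0 : F) 1, ∫⁻ g : G,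
        {p : G × F | ρ p.1⁻¹ (ι p.2) ∈ A}.indicator 1 (g, y) ∂μ :=
          lintegral_lintegral_swap (measurable_one.indicator hm2).aemeasurable
      _ = ∫⁻ y in ball (0 : F) 1, h (ι y) := by
          congr 1; ext y
          exact lintegral_indicator_one (measurable_prodMk_right hm2)
      _ = ∫⁻ y in ball (0 : F) 1, h x₀ := by
          refine lintegral_congr_ae (ae_restrict_of_ae ?_)
          filter_upwards [Measure.ae_ne volume (0 : F)] with y hy
          exact hconst _ ((map_ne_zero_iff ι ι.injective).mpr hy)
      _ = _ := by simp
  · intro w hw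
    have hmw : Measurable fun x : E => w ‖x‖ := by fun_prop
    have e1 : ∀ g : G, ∫⁻ x in A, w ‖x‖ =
        ∫⁻ x, {p : G × E | ρ p.1⁻¹ p.2 ∈ A}.indicator
          (fun p => w ‖p.2‖) (g, x) := by
      intro g
      have := (ρ g⁻¹).measurePreserving.lintegral_comp
        (hmw.indicator hA)
      rw [← lintegral_indicator hA, ← this]
      congr 1; ext x
      by_cases hx : ρ g⁻¹ x ∈ A
      · rw [Set.indicator_of_mem (by exact hx), Set.indicator_of_mem (by exact hx),
          LinearIsometryEquiv.norm_map]
      · rw [Set.indicator_of_notMem (by exact hx), Set.indicator_of_notMem (by exact hx)]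
    calc ∫⁻ x in A, w ‖x‖ = ∫⁻ g : G, ∫⁻ x in A, w ‖x‖ ∂volume ∂μ := by simp
      _ = ∫⁻ g : G, ∫⁻ x, {p : G × E | ρ p.1⁻¹ p.2 ∈ A}.indicator
          (fun p => w ‖p.2‖) (g, x) ∂volume ∂μ := lintegral_congr e1
      _ = ∫⁻ x, ∫⁻ g : G, {p : G × E | ρ p.1⁻¹ p.2 ∈ A}.indicator
          (fun p => w ‖p.2‖) (g, x) ∂μ :=
          lintegral_lintegral_swap
            ((hmw.comp measurable_snd).indicator hmeas).aemeasurable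
      _ = ∫⁻ x, h x₀ * w ‖x‖ := by
          refine lintegral_congr_ae ?_
          filter_upwards [Measure.ae_ne volume (0 : E)] with x hx
          rw [← hconst x hx, mul_comm]
          exact lintegral_indicator_const (measurable_prodMk_right hmeas) (w ‖x‖)
      _ = _ := lintegral_const_mul _ hmw

/-- `averaging_of_group` for the Haar measure of the orthogonal group, realized as the unitary
elements of the algebra `E →L[ℝ] E`, a compact set because it is closed and bounded in a
finite-dimensional space. -/
theorem averaging {E F : Type*} [NormedAddCommGroup E] [InnerProductSpace ℝ E]
    [FiniteDimensional ℝ E] [CompleteSpace E] [MeasurableSpace E] [BorelSpace E] [Nontrivial E]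
    [NormedAddCommGroup F] [InnerProductSpace ℝ F]
    [FiniteDimensional ℝ F] [MeasurableSpace F] [BorelSpace F] [Nontrivial F]
    (ι : F →ₗᵢ[ℝ] E) (A : Set E) (hA : MeasurableSet A)
    (hcone : ∀ x ∈ A, ∀ t : ℝ, 0 < t → t • x ∈ A) (a : ENNReal)
    (ha : ∀ g : E ≃ₗᵢ[ℝ] E, a ≤ volume {y : F | y ∈ ball (0 : F) 1 ∧ g (ι y) ∈ A}) :
    ∃ c : ENNReal, a ≤ c * volume (ball (0 : F) 1) ∧
      ∀ w : ℝ → ENNReal, Measurable w →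
        ∫⁻ x in A, w ‖x‖ = c * ∫⁻ x : E, w ‖x‖ := by
  have : ProperSpace (E →L[ℝ] E) := FiniteDimensional.proper ℝ _
  have : NormedStarGroup (E →L[ℝ] E) := CStarRing.to_normedStarGroup
  have : CompactSpace (unitary (E →L[ℝ] E)) := by
    apply isCompact_iff_compactSpace.mp
    refine Metric.isCompact_of_isClosed_isBounded isClosed_unitary ?_
    refine (isBounded_closedBall (x := (0 : E →L[ℝ] E)) (r := 1)).subset fun g hg => ?_
    rw [mem_closedBall_zero_iff]
    exact CStarRing.norm_of_mem_unitary hg |>.le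
  let _ : MeasurableSpace (unitary (E →L[ℝ] E)) := borel _
  have : BorelSpace (unitary (E →L[ℝ] E)) := ⟨rfl⟩
  have : IsProbabilityMeasure
      (Measure.haarMeasure (⊤ : TopologicalSpace.PositiveCompacts (unitary (E →L[ℝ] E)))) :=
    ⟨Measure.haarMeasure_self⟩
  refine averaging_of_group (Measure.haarMeasure
    (⊤ : TopologicalSpace.PositiveCompacts (unitary (E →L[ℝ] E))))
    Unitary.linearIsometryEquiv.toMonoidHom Unitary.linearIsometryEquiv.surjective ?_
    ι A hA hcone a ha
  exact (continuous_subtype_val.comp continuous_fst).clm_apply continuous_snd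

/-! ### The hyperbolic volume of a ball -/

open Real in
/-- The substitution `r = tanh t` in the radial integral of the Klein volume density. -/
theorem integral_klein_radial (m : ℕ) (d₁ : ℝ) (h0 : 0 < d₁) (h1 : d₁ < 1) :
    ∫ r in (0 : ℝ)..d₁, r ^ (m + 1) * (1 - r ^ 2) ^ (-(((m + 2 : ℕ) : ℝ) + 1) / 2) =
      ∫ t in (0 : ℝ)..(_root_.artanh d₁), sinh t ^ (m + 1) := by
  -- the logarithmic formula agrees with `Real.artanh`, which is known to invert `tanh`
  have hart : _root_.artanh d₁ = Real.artanh d₁ := by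
    rw [Real.artanh_eq_half_log ⟨by linarith, h1.le⟩, _root_.artanh]
    ring
  have htanh : tanh (_root_.artanh d₁) = d₁ := by
    rw [hart, Real.tanh_artanh ⟨by linarith, h1⟩]
  have hone : ∀ t : ℝ, 1 - tanh t ^ 2 = (cosh t ^ 2)⁻¹ := by
    intro t
    have := cosh_pos t
    rw [tanh_eq_sinh_div_cosh]
    field_simp
    linarith [cosh_sq t]
  have key := intervalIntegral.integral_comp_mul_deriv' (a := 0) (b := _root_.artanh d₁)
    (f := tanh) (f' := fun t => (cosh t ^ 2)⁻¹)
    (g := fun r => r ^ (m + 1) * (1 - r ^ 2) ^ (-(((m + 2 : ℕ) : ℝ) + 1) / 2)) ?_ ?_ ?_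
  · rw [htanh, tanh_zero] at key
    rw [← key]
    refine intervalIntegral.integral_congr fun t _ => ?_
    have hc := cosh_pos t
    simp only [Function.comp, hone]
    have : (cosh t ^ 2)⁻¹ ^ (-(((m + 2 : ℕ) : ℝ) + 1) / 2) = cosh t ^ (m + 3) := by
      rw [← rpow_natCast (cosh t) 2, ← rpow_neg hc.le, ← rpow_mul hc.le, ← rpow_natCast]
      congr 1
      push_cast
      ring
    rw [this, tanh_eq_sinh_div_cosh, div_pow, show m + 3 = (m + 1) + 2 from rfl,
      pow_add (cosh t) (m + 1) 2]
    field_simp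
  · intro t _
    have h := (hasDerivAt_sinh t).div (hasDerivAt_cosh t) (cosh_pos t).ne'
    have e : tanh = sinh / cosh := by
      ext x
      exact tanh_eq_sinh_div_cosh x
    rw [e]
    refine h.congr_deriv ?_
    have := cosh_pos t
    rw [div_eq_iff (by positivity), inv_mul_cancel₀ (by positivity)]
    linarith [cosh_sq t]
  · refine Continuous.continuousOn ?_
    exact (continuous_cosh.pow 2).inv₀ fun t => (pow_pos (cosh_pos t) 2).ne'
  · rintro _ ⟨t, -, rfl⟩
    refine ContinuousAt.continuousWithinAt ?_
    refine ContinuousAt.mul (by fun_prop) (ContinuousAt.rpow_const (by fun_prop) (Or.inl ?_))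
    have := tanh_sq_lt_one t
    linarith

open Real in
/-- The left side is the hyperbolic volume of the ball of Euclidean radius `d₁`, written as the
integral of a radial function over the whole space. -/
theorem lintegral_hyp_ball (m : ℕ) (d₁ : ℝ) (h0 : 0 < d₁) (h1 : d₁ < 1) :
    ∫⁻ x : EuclideanSpace ℝ (Fin (m + 2)), (Set.Iio d₁).indicator
        (fun r => ENNReal.ofReal ((1 - r ^ 2) ^ (-((((m + 2 : ℕ) : ℝ) + 1) / 2)))) ‖x‖ =
      ENNReal.ofReal (omegaSph (m + 2) * ∫ t in (0 : ℝ)..(_root_.artanh d₁), sinh t ^ (m + 1)) := by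
  have hmeas : Measurable ((Set.Iio d₁).indicator
      (fun r : ℝ => ENNReal.ofReal ((1 - r ^ 2) ^ (-((((m + 2 : ℕ) : ℝ) + 1) / 2))))) :=
    Measurable.indicator (by fun_prop) measurableSet_Iio
  have hkappa : volume (ball (0 : EuclideanSpace ℝ (Fin (m + 2))) 1) =
      ENNReal.ofReal (kappa (m + 2)) := by
    rw [EuclideanSpace.volume_ball, kappa]
    simp only [ENNReal.ofReal_one, one_pow, one_mul, Fintype.card_fin]
    congr 2
    rw [sqrt_eq_rpow, ← rpow_natCast, ← rpow_mul pi_pos.le]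
    congr 1
    ring
  have hkpos : 0 ≤ kappa (m + 2) := by
    unfold kappa
    have : 0 < Gamma (((m + 2 : ℕ) : ℝ) / 2 + 1) := Gamma_pos_of_pos (by positivity)
    positivity
  rw [lintegral_radial volume _ hmeas, hkappa, ENNReal.ofReal_mul (by unfold omegaSph; positivity)]
  congr 1
  · rw [omegaSph, ENNReal.ofReal_mul (by positivity), ENNReal.ofReal_natCast]
    simp
  · rw [← integral_klein_radial m d₁ h0 h1, intervalIntegral.integral_of_le h0.le,
      integral_Ioc_eq_integral_Ioo, ofReal_integral_eq_lintegral_ofReal]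
    · rw [← lintegral_indicator measurableSet_Ioi, ← lintegral_indicator measurableSet_Ioo]
      congr 1
      ext r
      by_cases hr : 0 < r
      · by_cases hr1 : r < d₁
        · rw [Set.indicator_of_mem (show r ∈ Set.Ioi 0 from hr),
            Set.indicator_of_mem (show r ∈ Set.Iio d₁ from hr1),
            Set.indicator_of_mem (show r ∈ Set.Ioo 0 d₁ from ⟨hr, hr1⟩),
            ← ENNReal.ofReal_mul (by positivity), neg_div]
          simp
        · rw [Set.indicator_of_mem (show r ∈ Set.Ioi 0 from hr),
            Set.indicator_of_notMem (show r ∉ Set.Iio d₁ from hr1),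
            Set.indicator_of_notMem (show r ∉ Set.Ioo 0 d₁ from fun h => hr1 h.2), mul_zero]
      · rw [Set.indicator_of_notMem (show r ∉ Set.Ioi 0 from hr),
          Set.indicator_of_notMem (show r ∉ Set.Ioo 0 d₁ from fun h => hr h.1)]
    · refine (ContinuousOn.integrableOn_Icc (a := 0) (b := d₁) ?_).mono_set Set.Ioo_subset_Icc_self
      intro r hr
      refine ContinuousAt.continuousWithinAt ?_
      refine ContinuousAt.mul (by fun_prop) (ContinuousAt.rpow_const (by fun_prop) (Or.inl ?_))
      nlinarith [hr.1, hr.2]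
    · filter_upwards [ae_restrict_mem measurableSet_Ioo] with r hr
      have : 0 ≤ 1 - r ^ 2 := by nlinarith [hr.1, hr.2]
      exact mul_nonneg (pow_nonneg hr.1.le _) (rpow_nonneg this _)

/-! ### The cap inside the convex hull of a point and a ball -/

open Real in
/-- The product form of `cos α`. It follows from
`(r₀ (a - b))² + (r₀² + a b)² = (a² + r₀²) (b² + r₀²)` with `a = √(d² - r₀²)`, `b = √(d₁² - r₀²)`.
Geometrically `a` and `b` are the lengths of the tangents to the sphere of radius `r₀` from points
at distance `d` and `d₁`, and `α` is the angle at the center between such points on one tangent. -/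
theorem alphaAngle_facts (r₀ d₁ d : ℝ) (h0 : 0 < r₀) (h1 : r₀ < d₁) (h2 : d₁ < d) :
    0 ≤ alphaAngle r₀ d d₁ ∧ alphaAngle r₀ d d₁ ≤ π ∧
      d * d₁ * cos (alphaAngle r₀ d d₁) = r₀ ^ 2 + √(d ^ 2 - r₀ ^ 2) * √(d₁ ^ 2 - r₀ ^ 2) := by
  have hd1 : 0 < d₁ := h0.trans h1
  have hd : 0 < d := hd1.trans h2
  have ha : √(d ^ 2 - r₀ ^ 2) ^ 2 = d ^ 2 - r₀ ^ 2 := sq_sqrt (by nlinarith)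
  have hb : √(d₁ ^ 2 - r₀ ^ 2) ^ 2 = d₁ ^ 2 - r₀ ^ 2 := sq_sqrt (by nlinarith)
  have hab : √(d₁ ^ 2 - r₀ ^ 2) ≤ √(d ^ 2 - r₀ ^ 2) := sqrt_le_sqrt (by nlinarith)
  have ha0 := sqrt_nonneg (d ^ 2 - r₀ ^ 2)
  have hb0 := sqrt_nonneg (d₁ ^ 2 - r₀ ^ 2)
  unfold alphaAngle
  generalize √(d ^ 2 - r₀ ^ 2) = a at *
  generalize √(d₁ ^ 2 - r₀ ^ 2) = b at *
  refine ⟨arcsin_nonneg.2 ?_, by linarith [arcsin_le_pi_div_two (r₀ * (a - b) / (d * d₁)), pi_pos], ?_⟩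
  · have : 0 ≤ a - b := by linarith
    positivity
  · rw [cos_arcsin]
    have : 1 - (r₀ * (a - b) / (d * d₁)) ^ 2 = ((r₀ ^ 2 + a * b) / (d * d₁)) ^ 2 := by
      have e : (d * d₁) ^ 2 = (a ^ 2 + r₀ ^ 2) * (b ^ 2 + r₀ ^ 2) := by
        rw [ha, hb]; ring
      rw [div_pow, div_pow, eq_div_iff (by positivity), sub_mul, div_mul_cancel₀ _ (by positivity), e]
      ring
    rw [this, sqrt_sq (by positivity)]
    field_simp

open Real in
/-- If a convex set contains the ball of radius `r₀` and a point `x` of norm at least `d`, then it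
contains the point of norm `d₁` in every direction `y` at angle at most `alphaAngle r₀ d d₁` from
`x`. For `y = 0` the conclusion reads `0 ∈ C`. -/
theorem smul_mem_of_cap {E : Type*} [NormedAddCommGroup E] [InnerProductSpace ℝ E]
    (C : Set E) (hC : Convex ℝ C) (r₀ d₁ d : ℝ) (h0 : 0 < r₀) (h1 : r₀ < d₁) (h2 : d₁ < d)
    (hball : closedBall (0 : E) r₀ ⊆ C) (x : E) (hx : x ∈ C) (hxd : d ≤ ‖x‖) (y : E)
    (hy : cos (alphaAngle r₀ d d₁) * ‖y‖ ≤ inner ℝ (‖x‖⁻¹ • x) y) :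
    (d₁ / ‖y‖) • y ∈ C := by
  have hd1 : 0 < d₁ := h0.trans h1
  have hd : 0 < d := hd1.trans h2
  have hx0 : 0 < ‖x‖ := hd.trans_le hxd
  have h0C : (0 : E) ∈ C := hball (by simp [h0.le])
  rcases eq_or_ne y 0 with rfl | hy0
  · simpa using h0C
  have hyp : 0 < ‖y‖ := norm_pos_iff.2 hy0
  obtain ⟨-, -, hcos⟩ := alphaAngle_facts r₀ d₁ d h0 h1 h2
  have ha : √(d ^ 2 - r₀ ^ 2) ^ 2 = d ^ 2 - r₀ ^ 2 := sq_sqrt (by nlinarith)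
  have hb : √(d₁ ^ 2 - r₀ ^ 2) ^ 2 = d₁ ^ 2 - r₀ ^ 2 := sq_sqrt (by nlinarith)
  have hab : √(d₁ ^ 2 - r₀ ^ 2) < √(d ^ 2 - r₀ ^ 2) := sqrt_lt_sqrt (by nlinarith) (by nlinarith)
  have hb0 := sqrt_nonneg (d₁ ^ 2 - r₀ ^ 2)
  generalize √(d ^ 2 - r₀ ^ 2) = a at *
  generalize √(d₁ ^ 2 - r₀ ^ 2) = b at *
  have ha0 : 0 < a := hb0.trans_lt hab
  set e : E := ‖x‖⁻¹ • x with he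
  have hen : ‖e‖ = 1 := by rw [he, norm_smul, norm_inv, norm_norm, inv_mul_cancel₀ hx0.ne']
  set u : E := ‖y‖⁻¹ • y with hu
  have hun : ‖u‖ = 1 := by rw [hu, norm_smul, norm_inv, norm_norm, inv_mul_cancel₀ hyp.ne']
  have heu : cos (alphaAngle r₀ d d₁) ≤ inner ℝ e u := by
    rw [hu, inner_smul_right, inv_mul_eq_div, le_div_iff₀ hyp]
    exact hy
  have hde : d • e ∈ C := by
    have := hC.smul_mem_of_zero_mem h0C hx (t := d / ‖x‖) ⟨by positivity, (div_le_one hx0).2 hxd⟩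
    rwa [he, smul_smul, ← div_eq_mul_inv]
  have hgoal : (d₁ / ‖y‖) • y = d₁ • u := by rw [hu, smul_smul, div_eq_mul_inv]
  rw [hgoal]
  clear_value u e
  -- the point `w` of the small ball with `d₁ u = (b / a) (d e) + (1 - b / a) w`
  set w : E := (a - b)⁻¹ • ((a * d₁) • u - (b * d) • e) with hw
  -- expanding the square, `‖w‖ ≤ r₀` is exactly the bound `h3` on the angle between `e` and `u`
  have hwn : ‖(a * d₁) • u - (b * d) • e‖ ≤ (a - b) * r₀ := by
    refine le_of_sq_le_sq ?_ (mul_nonneg (by linarith) h0.le)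
    rw [norm_sub_sq_real, norm_smul, norm_smul, hun, hen, inner_smul_left, inner_smul_right,
      real_inner_comm]
    simp only [Real.norm_eq_abs, mul_one, sq_abs, conj_trivial]
    have h3 : r₀ ^ 2 + a * b ≤ d * d₁ * inner ℝ e u := by
      rw [← hcos]
      exact mul_le_mul_of_nonneg_left heu (by positivity)
    have h4 := mul_le_mul_of_nonneg_left h3 (by positivity : 0 ≤ 2 * (a * b))
    have e1 : (a * d₁) ^ 2 = a ^ 2 * (b ^ 2 + r₀ ^ 2) := by rw [hb]; ring
    have e2 : (b * d) ^ 2 = b ^ 2 * (a ^ 2 + r₀ ^ 2) := by rw [ha]; ring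
    rw [e1, e2]
    linarith
  have hwC : w ∈ C := by
    refine hball ?_
    rw [mem_closedBall_zero_iff, hw, norm_smul, norm_inv, Real.norm_eq_abs,
      abs_of_pos (by linarith), inv_mul_le_iff₀ (by linarith)]
    exact hwn
  have hcomb := hC hde hwC (a := b / a) (b := (a - b) / a) (by positivity)
    (div_nonneg (by linarith) ha0.le) (by field_simp; ring)
  convert hcomb using 1
  have hab' : a - b ≠ 0 := by linarith
  rw [hw, smul_smul ((a - b) / a), show (a - b) / a * (a - b)⁻¹ = a⁻¹ by field_simp, smul_sub,
    smul_smul, smul_smul, smul_smul, show a⁻¹ * (a * d₁) = d₁ by field_simp,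
    show a⁻¹ * (b * d) = b / a * d by field_simp]
  abel

/-- An orthonormal basis of `F` is sent to one of a subspace of `E` of the same dimension. -/
theorem exists_linearIsometry_of_finrank_le (F E : Type*) [NormedAddCommGroup E]
    [InnerProductSpace ℝ E] [FiniteDimensional ℝ E] [NormedAddCommGroup F] [InnerProductSpace ℝ F]
    [FiniteDimensional ℝ F] (h : Module.finrank ℝ F ≤ Module.finrank ℝ E) :
    Nonempty (F →ₗᵢ[ℝ] E) := by
  obtain ⟨f, hf⟩ := exists_linearIndependent_of_le_finrank h
  let P := Submodule.span ℝ (Set.range f)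
  have hP : Module.finrank ℝ P = Module.finrank ℝ F := by
    rw [finrank_span_eq_card hf, Fintype.card_fin]
  let b := (stdOrthonormalBasis ℝ P).reindex (finCongr hP)
  exact ⟨P.subtypeₗᵢ.comp ((stdOrthonormalBasis ℝ F).repr.trans b.repr.symm).toLinearIsometry⟩

/-! ### The lower bound for the hyperbolic volume -/

/-- Since `C` is star-shaped about the center, it contains the part of the cone over its trace on
the sphere of radius `d₁` that lies inside this sphere. -/
theorem hvol_lower_bound (m : ℕ) (C : Set (EuclideanSpace ℝ (Fin (m + 2)))) (hC : Convex ℝ C)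
    (h0C : (0 : EuclideanSpace ℝ (Fin (m + 2))) ∈ C) (d₁ : ℝ) (h0 : 0 < d₁)
    (hA : MeasurableSet {x : EuclideanSpace ℝ (Fin (m + 2)) | (d₁ / ‖x‖) • x ∈ C}) :
    ∫⁻ x in {x : EuclideanSpace ℝ (Fin (m + 2)) | (d₁ / ‖x‖) • x ∈ C}, (Set.Iio d₁).indicator
        (fun r => ENNReal.ofReal ((1 - r ^ 2) ^ (-((((m + 2 : ℕ) : ℝ) + 1) / 2)))) ‖x‖ ≤
      hvol (m + 2) C := by
  unfold hvol
  have hsub : {x : EuclideanSpace ℝ (Fin (m + 2)) | (d₁ / ‖x‖) • x ∈ C} ∩ ball 0 d₁ ⊆ C := by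
    rintro x ⟨hx, hxd⟩
    rw [mem_ball_zero_iff] at hxd
    rcases eq_or_ne x 0 with rfl | hx0
    · exact h0C
    have hxp : 0 < ‖x‖ := norm_pos_iff.2 hx0
    have := hC.smul_mem_of_zero_mem h0C hx (t := ‖x‖ / d₁)
      ⟨by positivity, (div_le_one h0).2 hxd.le⟩
    rwa [smul_smul, div_mul_div_cancel₀ h0.ne', div_self hxp.ne', one_smul] at this
  refine le_trans ?_ (lintegral_mono_set hsub)
  rw [← lintegral_indicator hA, ← lintegral_indicator (hA.inter measurableSet_ball)]
  refine lintegral_mono fun x => ?_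
  by_cases h1 : x ∈ {x : EuclideanSpace ℝ (Fin (m + 2)) | (d₁ / ‖x‖) • x ∈ C}
  · by_cases h2 : ‖x‖ < d₁
    · rw [Set.indicator_of_mem h1, Set.indicator_of_mem (show ‖x‖ ∈ Set.Iio d₁ from h2),
        Set.indicator_of_mem (Set.mem_inter h1 (mem_ball_zero_iff.2 h2))]
    · rw [Set.indicator_of_mem h1, Set.indicator_of_notMem (show ‖x‖ ∉ Set.Iio d₁ from h2)]
      exact zero_le
  · rw [Set.indicator_of_notMem h1]
    exact zero_le

/-- Theorem `basicthm` (hyperbolic case, exact form): if the hyperbolic volume of `C` is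
smaller than `ω_n · (∫₀^{artanh d₁} sinh^{n-1}) · ν(cap of radius α_{r₀}(d, d₁))`, then
some `k`-plane through the center meets `C` inside the Euclidean ball of radius `d`. -/
theorem basicthm (n k : ℕ) (hn : 2 ≤ n) (hk : 2 ≤ k) (hkn : k ≤ n)
    (C : Set (EuclideanSpace ℝ (Fin n)))
    (hCconv : Convex ℝ C) (hCsub : C ⊆ ball (0 : EuclideanSpace ℝ (Fin n)) 1)
    (hCrelcl : C = closure C ∩ ball (0 : EuclideanSpace ℝ (Fin n)) 1)
    (r₀ d₁ d : ℝ) (h₀ : 0 < r₀) (h₁ : r₀ < d₁) (h₂ : d₁ < d) (hd : d < 1)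
    (hball : closedBall (0 : EuclideanSpace ℝ (Fin n)) r₀ ⊆ C)
    (hvolC : hvol n C <
      ENNReal.ofReal (omegaSph n * (∫ t in (0:ℝ)..artanh d₁, Real.sinh t ^ (n - 1)) *
        (∫ t in (0:ℝ)..alphaAngle r₀ d d₁, Real.sin t ^ (k - 2)) /
        (∫ t in (0:ℝ)..Real.pi, Real.sin t ^ (k - 2)))) :
    ∃ P : Submodule ℝ (EuclideanSpace ℝ (Fin n)), Module.finrank ℝ P = k ∧
      C ∩ (P : Set (EuclideanSpace ℝ (Fin n))) ⊆ ball (0 : EuclideanSpace ℝ (Fin n)) d := by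
  obtain ⟨N, rfl⟩ : ∃ N, n = N + 2 := ⟨n - 2, by omega⟩
  obtain ⟨m, rfl⟩ : ∃ m, k = m + 2 := ⟨k - 2, by omega⟩
  by_contra! hcon
  have hd1 : 0 < d₁ := h₀.trans h₁
  have h0C : (0 : EuclideanSpace ℝ (Fin (N + 2))) ∈ C := hball (by simp [h₀.le])
  have hCm : MeasurableSet C := by
    rw [hCrelcl]
    exact isClosed_closure.measurableSet.inter measurableSet_ball
  -- the cone over the part of the sphere of radius `d₁` in `C`; it contains `0`, as `d₁ / 0 = 0`
  let A : Set (EuclideanSpace ℝ (Fin (N + 2))) := {x | (d₁ / ‖x‖) • x ∈ C}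
  have hA : MeasurableSet A := by
    have : Measurable fun x : EuclideanSpace ℝ (Fin (N + 2)) => (d₁ / ‖x‖) • x := by fun_prop
    exact this hCm
  have hcone : ∀ x ∈ A, ∀ t : ℝ, 0 < t → t • x ∈ A := by
    intro x hx t ht
    have e : (d₁ / ‖t • x‖) • t • x = (d₁ / ‖x‖) • x := by
      rw [norm_smul, Real.norm_eq_abs, abs_of_pos ht, smul_smul, div_mul_eq_mul_div,
        mul_comm t, mul_div_mul_right _ _ ht.ne']
    exact Set.mem_ofPred_eq ▸ e.symm ▸ hx
  have hfin : Module.finrank ℝ (Cyl m) = m + 2 := by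
    rw [(WithLp.linearEquiv 2 ℝ (ℝ × EuclideanSpace ℝ (Fin (m + 1)))).finrank_eq]
    simp
    ring
  have : Nontrivial (Cyl m) := Module.nontrivial_of_finrank_pos (R := ℝ) (by omega)
  obtain ⟨ι⟩ := exists_linearIsometry_of_finrank_le (Cyl m) (EuclideanSpace ℝ (Fin (N + 2)))
    (by rw [hfin, finrank_euclideanSpace_fin]; exact hkn)
  obtain ⟨hα0, hαπ, -⟩ := alphaAngle_facts r₀ d₁ d h₀ h₁ h₂
  set α := alphaAngle r₀ d d₁ with hα
  have hIπ : 0 < ∫ t in (0 : ℝ)..Real.pi, Real.sin t ^ m := integral_sin_pow_pos m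
  have hIα : 0 ≤ ∫ t in (0 : ℝ)..α, Real.sin t ^ m :=
    intervalIntegral.integral_nonneg hα0 fun t ht =>
      pow_nonneg (Real.sin_nonneg_of_nonneg_of_le_pi ht.1 (ht.2.trans hαπ)) m
  have hJ : 0 ≤ ∫ t in (0 : ℝ)..artanh d₁, Real.sinh t ^ (N + 1) := by
    rw [← integral_klein_radial N d₁ hd1 (h₂.trans hd)]
    refine intervalIntegral.integral_nonneg hd1.le fun r hr => ?_
    have : 0 ≤ 1 - r ^ 2 := by nlinarith [hr.1, hr.2]
    exact mul_nonneg (pow_nonneg hr.1 _) (Real.rpow_nonneg this _)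
  -- the share of the unit ball of the `k`-plane that every rotated copy must meet
  have hplane : ∀ g : EuclideanSpace ℝ (Fin (N + 2)) ≃ₗᵢ[ℝ] EuclideanSpace ℝ (Fin (N + 2)),
      volume (ball (0 : Cyl m) 1) * ENNReal.ofReal (∫ θ in (0 : ℝ)..α, Real.sin θ ^ m) /
        ENNReal.ofReal (∫ θ in (0 : ℝ)..Real.pi, Real.sin θ ^ m) ≤
      volume {y : Cyl m | y ∈ ball (0 : Cyl m) 1 ∧ g (ι y) ∈ A} := by
    intro g
    let j : Cyl m →ₗᵢ[ℝ] EuclideanSpace ℝ (Fin (N + 2)) := g.toLinearIsometry.comp ι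
    have hr : Module.finrank ℝ (LinearMap.range j.toLinearMap) = m + 2 := by
      rw [LinearMap.finrank_range_of_inj j.injective, hfin]
    obtain ⟨x, ⟨hxC, ⟨v, rfl⟩⟩, hxd⟩ := Set.not_subset.1 (hcon _ hr)
    have hxd' : d ≤ ‖j v‖ := by simpa using hxd
    have hv : 0 < ‖v‖ := by
      rw [← j.norm_map]
      linarith
    have he : ‖(‖v‖⁻¹ • v)‖ = 1 := by
      rw [norm_smul, norm_inv, norm_norm, inv_mul_cancel₀ hv.ne']
    rw [ENNReal.div_le_iff (by simpa using hIπ) ENNReal.ofReal_ne_top,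
      ← volume_cap m (‖v‖⁻¹ • v) he α hα0 hαπ]
    refine mul_le_mul' (measure_mono ?_) le_rfl
    rintro y ⟨hy1, hy2⟩
    refine ⟨mem_ball_zero_iff.2 hy1, ?_⟩
    refine smul_mem_of_cap C hCconv r₀ d₁ d h₀ h₁ h₂ hball (j v) hxC hxd' (j y) ?_
    rw [j.norm_map, j.norm_map, ← j.map_smul, j.inner_map_map]
    exact hy2
  obtain ⟨c, hc1, hc2⟩ := averaging ι A hA hcone _ hplane
  have hvb0 : volume (ball (0 : Cyl m) 1) ≠ 0 := (measure_ball_pos _ _ one_pos).ne'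
  have hvbt : volume (ball (0 : Cyl m) 1) ≠ ⊤ := measure_ball_lt_top.ne
  have hc : ENNReal.ofReal (∫ θ in (0 : ℝ)..α, Real.sin θ ^ m) /
      ENNReal.ofReal (∫ θ in (0 : ℝ)..Real.pi, Real.sin θ ^ m) ≤ c := by
    rw [mul_div_assoc, mul_comm c] at hc1
    exact (ENNReal.mul_le_mul_iff_right hvb0 hvbt).1 hc1
  have hw := hc2 ((Set.Iio d₁).indicator
      (fun r : ℝ => ENNReal.ofReal ((1 - r ^ 2) ^ (-((((N + 2 : ℕ) : ℝ) + 1) / 2)))))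
      (Measurable.indicator (by fun_prop) measurableSet_Iio)
  have hlow := hvol_lower_bound N C hCconv h0C d₁ hd1 hA
  rw [lintegral_hyp_ball N d₁ hd1 (h₂.trans hd)] at hw
  -- `hlow` and `hw` give `c * hvol (ball 0 d₁) ≤ hvol C`, and `hc` bounds `c` from below
  refine absurd hvolC (not_lt.2 ?_)
  refine le_trans ?_ (hw.symm.le.trans hlow)
  have e1 : N + 2 - 1 = N + 1 := rfl
  have e2 : m + 2 - 2 = m := rfl
  rw [e1, e2, mul_div_assoc, mul_comm, ENNReal.ofReal_mul (div_nonneg hIα hIπ.le),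
    ENNReal.ofReal_div_of_pos hIπ]
  exact mul_le_mul' hc le_rfl
end
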